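/- Let n ≥ 3, let K be a Hilbert space, let K₀ : K → L²(ℝⁿ) be a bounded everywhere defined operator with ran K₀ ⊂ H^{3/2}(ℝⁿ), and let α ∈ L^∞(ℝⁿ) ∩ L²(ℝⁿ). Then α K₀ belongs to the Schatten–von Neumann class S_r for every r > 2n/3. -/

import Mathlib

open MeasureTheory Filter Topology

noncomputable section

namespace RobinHS

/-- The boundary `ℝⁿ`, modelled as Euclidean space. -/
abbrev Bdy (n : ℕ) := EuclideanSpace ℝ (Fin n)

/-- The ambient space `ℝⁿ × ℝ ≅ ℝ^{n+1}`. -/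
abbrev Amb (n : ℕ) := Bdy n × ℝ

/-- The open upper half-space `ℝ^{n+1}_+`. -/
def half (n : ℕ) : Set (Amb n) := {x | 0 < x.2}

/-- Lebesgue measure restricted to the half-space. -/
abbrev μplus (n : ℕ) : Measure (Amb n) := volume.restrict (half n)

/-- `L²(ℝ^{n+1}_+)`. -/
abbrev Hplus (n : ℕ) := Lp ℂ 2 (μplus n)

/-- `L²(ℝⁿ)`. -/
abbrev Hbd (n : ℕ) := Lp ℂ 2 (volume : Measure (Bdy n))

/-- The coordinate directions of `ℝ^{n+1}`. -/
def dirs (n : ℕ) (i : Fin (n + 1)) : Amb n :=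
  if h : (i : ℕ) < n then (EuclideanSpace.single ⟨i, h⟩ (1 : ℝ), 0) else (0, 1)

/-- Real-valued test functions compactly supported in `U`. -/
def IsTest (n : ℕ) (U : Set (Amb n)) (φ : Amb n → ℝ) : Prop :=
  ContDiff ℝ (⊤ : ℕ∞) φ ∧ HasCompactSupport φ ∧ tsupport φ ⊆ U

/-- Complex-valued test functions compactly supported in `U`. -/
def IsTestC (n : ℕ) (U : Set (Amb n)) (φ : Amb n → ℂ) : Prop :=
  ContDiff ℝ (⊤ : ℕ∞) φ ∧ HasCompactSupport φ ∧ tsupport φ ⊆ U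

/-- `g` is the weak (distributional) derivative of `f` in direction `v` on `U`. -/
def IsWeakDeriv (n : ℕ) (U : Set (Amb n)) (v : Amb n) (f g : Amb n → ℂ) : Prop :=
  ∀ φ : Amb n → ℝ, IsTest n U φ →
    ∫ x in U, f x * ((fderiv ℝ φ x) v : ℂ) = - ∫ x in U, g x * (φ x : ℂ)

def MemL2 (n : ℕ) (U : Set (Amb n)) (f : Amb n → ℂ) : Prop :=
  MemLp f 2 (volume.restrict U)

/-- The Sobolev space `H¹(U)`. -/
def MemH1 (n : ℕ) (U : Set (Amb n)) (f : Amb n → ℂ) : Prop :=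
  MemL2 n U f ∧ ∀ i : Fin (n + 1), ∃ g, IsWeakDeriv n U (dirs n i) f g ∧ MemL2 n U g

/-- The Sobolev space `H²(U)`. -/
def MemH2 (n : ℕ) (U : Set (Amb n)) (f : Amb n → ℂ) : Prop :=
  MemL2 n U f ∧ ∀ i : Fin (n + 1), ∃ g, IsWeakDeriv n U (dirs n i) f g ∧ MemL2 n U g ∧
    ∀ j : Fin (n + 1), ∃ h, IsWeakDeriv n U (dirs n j) g h ∧ MemL2 n U h

/-- Finiteness of the Gagliardo seminorm of order `1/2` on `U ⊆ ℝ^{n+1}`. -/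
def Gag12 (n : ℕ) (U : Set (Amb n)) (g : Amb n → ℂ) : Prop :=
  Integrable (fun p : Amb n × Amb n => ‖g p.1 - g p.2‖ ^ 2 / ‖p.1 - p.2‖ ^ ((n : ℝ) + 2))
    ((volume.restrict U).prod (volume.restrict U))

/-- The fractional Sobolev space `H^{3/2}(U)` (Sobolev–Slobodeckij description). -/
def MemH32 (n : ℕ) (U : Set (Amb n)) (f : Amb n → ℂ) : Prop :=
  MemL2 n U f ∧ ∀ i : Fin (n + 1), ∃ g, IsWeakDeriv n U (dirs n i) f g ∧ MemL2 n U g ∧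
    Gag12 n U g

/-- The classical Laplacian of a test function. -/
def lapl (n : ℕ) (φ : Amb n → ℝ) (x : Amb n) : ℝ :=
  ∑ i : Fin (n + 1), fderiv ℝ (fun y => fderiv ℝ φ y (dirs n i)) x (dirs n i)

/-- `g = -Δ f` in the weak (distributional) sense on `U`. -/
def IsNegLap (n : ℕ) (U : Set (Amb n)) (f g : Amb n → ℂ) : Prop :=
  ∀ φ : Amb n → ℝ, IsTest n U φ →
    ∫ x in U, f x * (lapl n φ x : ℂ) = - ∫ x in U, g x * (φ x : ℂ)

/-- `b` is the Dirichlet boundary trace `f|_{ℝⁿ}` of `f` (as an `L²(ℝⁿ)` limit). -/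
def HasDTrace (n : ℕ) (f : Amb n → ℂ) (b : Bdy n → ℂ) : Prop :=
  Tendsto (fun t : ℝ => ∫ y : Bdy n, ‖f (y, t) - b y‖ ^ 2) (𝓝[>] (0 : ℝ)) (𝓝 (0 : ℝ))

/-- `b = ∂_ν f|_{ℝⁿ}` is the trace of the normal derivative of `f`, the normal pointing
outwards of the half-space (i.e. downwards). -/
def HasNTrace (n : ℕ) (f : Amb n → ℂ) (b : Bdy n → ℂ) : Prop :=
  ∃ f', IsWeakDeriv n (half n) ((0 : Bdy n), (1 : ℝ)) f f' ∧ HasDTrace n f' (fun y => - b y)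

/-- The Sobolev space `H²₀(ℝ^{n+1}_+)`: `H²`-functions approximable in the `H²`-norm by
smooth functions compactly supported in the open half-space. -/
def MemH20 (n : ℕ) (f : Amb n → ℂ) : Prop :=
  MemH2 n (half n) f ∧
  ∀ ε : ℝ, 0 < ε → ∃ φ : Amb n → ℂ, IsTestC n (half n) φ ∧
    (∫ x in half n, ‖f x - φ x‖ ^ 2) < ε ∧
    (∀ i : Fin (n + 1), ∀ g, IsWeakDeriv n (half n) (dirs n i) f g →
      (∫ x in half n, ‖g x - (fderiv ℝ φ x) (dirs n i)‖ ^ 2) < ε) ∧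
    (∀ i j : Fin (n + 1), ∀ g h, IsWeakDeriv n (half n) (dirs n i) f g →
      IsWeakDeriv n (half n) (dirs n j) g h →
      (∫ x in half n, ‖h x - (fderiv ℝ (fun y => (fderiv ℝ φ y) (dirs n i)) x) (dirs n j)‖ ^ 2) < ε)

/-- Membership in the domain of the Robin Laplacian `A_α`:
`f ∈ H²(ℝ^{n+1}_+)` with `∂_ν f|_{ℝⁿ} = α f|_{ℝⁿ}`. -/
def RobinDom (n : ℕ) (α : Bdy n → ℂ) (f : Amb n → ℂ) : Prop :=
  MemH2 n (half n) f ∧ ∃ b : Bdy n → ℂ, HasDTrace n f b ∧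
    HasNTrace n f (fun y => α y * b y)

/-- The graph relation of the Robin Laplacian `A_α` in `L²(ℝ^{n+1}_+)`: `w = A_α u`. -/
def RobinRel (n : ℕ) (α : Bdy n → ℂ) (u w : Hplus n) : Prop :=
  ∃ f g : Amb n → ℂ, ⇑u =ᵐ[μplus n] f ∧ ⇑w =ᵐ[μplus n] g ∧
    RobinDom n α f ∧ IsNegLap n (half n) f g

/-- The graph relation of the Neumann Laplacian `A_N` in `L²(ℝ^{n+1}_+)`. -/
def NeuRel (n : ℕ) (u w : Hplus n) : Prop :=
  ∃ f g : Amb n → ℂ, ⇑u =ᵐ[μplus n] f ∧ ⇑w =ᵐ[μplus n] g ∧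
    MemH2 n (half n) f ∧ HasNTrace n f (fun _ => 0) ∧ IsNegLap n (half n) f g

/-- Membership in `H^{3/2}_Δ(ℝ^{n+1}_+) = {f ∈ H^{3/2} : Δf ∈ L²}`. -/
def TDom (n : ℕ) (f : Amb n → ℂ) : Prop :=
  MemH32 n (half n) f ∧ ∃ L, IsNegLap n (half n) f L ∧ MemL2 n (half n) L

/-- The graph relation of the operator `T = -Δ` on `H^{3/2}_Δ(ℝ^{n+1}_+)`. -/
def TRel (n : ℕ) (u w : Hplus n) : Prop :=
  ∃ f g : Amb n → ℂ, ⇑u =ᵐ[μplus n] f ∧ ⇑w =ᵐ[μplus n] g ∧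
    TDom n f ∧ IsNegLap n (half n) f g

/-- The graph relation of `T` restricted to `ker Γ₀` (vanishing Neumann trace). -/
def TNeuRel (n : ℕ) (u w : Hplus n) : Prop :=
  ∃ f g : Amb n → ℂ, ⇑u =ᵐ[μplus n] f ∧ ⇑w =ᵐ[μplus n] g ∧
    TDom n f ∧ HasNTrace n f (fun _ => 0) ∧ IsNegLap n (half n) f g

/-- The graph relation of the minimal operator `A = -Δ` on `H²₀(ℝ^{n+1}_+)`. -/
def MinRel (n : ℕ) (u w : Hplus n) : Prop :=
  ∃ f g : Amb n → ℂ, ⇑u =ᵐ[μplus n] f ∧ ⇑w =ᵐ[μplus n] g ∧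
    MemH20 n f ∧ IsNegLap n (half n) f g

/-- `f ∈ ker (T - λ)`. -/
def EigSol (n : ℕ) (lam : ℂ) (f : Amb n → ℂ) : Prop :=
  TDom n f ∧ IsNegLap n (half n) f (fun x => lam * f x)

/-- `α ∈ W^{1,∞}(ℝⁿ)`: bounded with bounded (weak) first-order derivatives,
equivalently bounded and Lipschitz. -/
def IsW1inf (n : ℕ) (α : Bdy n → ℂ) : Prop :=
  (∃ C : ℝ, ∀ x, ‖α x‖ ≤ C) ∧ ∃ L : NNReal, LipschitzWith L α

/-- `‖α‖_∞ = sup_x |α(x)|`. -/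
def supNorm (n : ℕ) (α : Bdy n → ℂ) : ℝ := ⨆ x, ‖α x‖

/-- `γ` is the Poisson operator `γ(λ)` (the `γ`-field): it maps the Neumann trace
`∂_ν f_λ|_{ℝⁿ}` of `f_λ ∈ ker(T - λ)` to `f_λ`. -/
def IsPoissonOp (n : ℕ) (lam : ℂ) (γ : Hbd n →L[ℂ] Hplus n) : Prop :=
  ∀ (Φ : Hbd n) (a : Bdy n → ℂ) (f : Amb n → ℂ),
    ⇑Φ =ᵐ[(volume : Measure (Bdy n))] a → EigSol n lam f → HasNTrace n f a →
      ⇑(γ Φ) =ᵐ[μplus n] f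

/-- `M` is the Neumann-to-Dirichlet map `M(λ)` (the Weyl function): it maps the Neumann
trace of `f_λ ∈ ker(T - λ)` to its Dirichlet trace. -/
def IsNDMap (n : ℕ) (lam : ℂ) (M : Hbd n →L[ℂ] Hbd n) : Prop :=
  ∀ (Φ : Hbd n) (a b : Bdy n → ℂ) (f : Amb n → ℂ),
    ⇑Φ =ᵐ[(volume : Measure (Bdy n))] a → EigSol n lam f → HasNTrace n f a →
      HasDTrace n f b → ⇑(M Φ) =ᵐ[(volume : Measure (Bdy n))] b

/-- `M` is the bounded multiplication operator by `α` in `L²(ℝⁿ)`. -/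
def IsMultOp (n : ℕ) (α : Bdy n → ℂ) (M : Hbd n →L[ℂ] Hbd n) : Prop :=
  ∀ u : Hbd n, ⇑(M u) =ᵐ[(volume : Measure (Bdy n))] fun y => α y * u y

/-! Sobolev spaces on the boundary `ℝⁿ`. -/

def bdirs (n : ℕ) (i : Fin n) : Bdy n := EuclideanSpace.single i (1 : ℝ)

def IsTestB (n : ℕ) (φ : Bdy n → ℝ) : Prop := ContDiff ℝ (⊤ : ℕ∞) φ ∧ HasCompactSupport φ

def IsWeakDerivB (n : ℕ) (v : Bdy n) (f g : Bdy n → ℂ) : Prop :=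
  ∀ φ : Bdy n → ℝ, IsTestB n φ →
    ∫ y, f y * ((fderiv ℝ φ y) v : ℂ) = - ∫ y, g y * (φ y : ℂ)

/-- Finiteness of the Gagliardo seminorm of order `1/2` on `ℝⁿ`. -/
def GagB (n : ℕ) (g : Bdy n → ℂ) : Prop :=
  Integrable (fun p : Bdy n × Bdy n => ‖g p.1 - g p.2‖ ^ 2 / ‖p.1 - p.2‖ ^ ((n : ℝ) + 1))
    ((volume : Measure (Bdy n)).prod (volume : Measure (Bdy n)))

/-- The fractional Sobolev space `H^{3/2}(ℝⁿ)`. -/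
def MemH32B (n : ℕ) (f : Bdy n → ℂ) : Prop :=
  MemLp f 2 (volume : Measure (Bdy n)) ∧
  ∀ i : Fin n, ∃ g, IsWeakDerivB n (bdirs n i) f g ∧
    MemLp g 2 (volume : Measure (Bdy n)) ∧ GagB n g

/-! Abstract notions for (graph relations of) unbounded operators in Hilbert spaces,
Schatten–von Neumann classes, groups, spectra. -/

section Abstract

variable {H G : Type*} [NormedAddCommGroup H] [InnerProductSpace ℂ H] [CompleteSpace H]
  [NormedAddCommGroup G] [InnerProductSpace ℂ G] [CompleteSpace G]

/-- `R` is the (bounded, everywhere defined, two-sided) resolvent of the operator with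
graph relation `Rel` at the point `lam`. -/
def RelResolventAt (Rel : H → H → Prop) (lam : ℂ) (R : H →L[ℂ] H) : Prop :=
  (∀ u : H, Rel (R u) (u + lam • R u)) ∧
  (∀ u w : H, Rel u w → R (w - lam • u) = u)

/-- `lam` belongs to the resolvent set of the operator with graph relation `Rel`. -/
def RelInResolvent (Rel : H → H → Prop) (lam : ℂ) : Prop :=
  ∃ R : H →L[ℂ] H, RelResolventAt Rel lam R

/-- The graph relation of the adjoint operator. -/
def AdjRel (Rel : H → H → Prop) (u w : H) : Prop :=
  ∀ f g : H, Rel f g → (inner ℂ g u : ℂ) = (inner ℂ f w : ℂ)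

/-- Symmetry of the operator with graph relation `Rel`. -/
def IsSymmRel (Rel : H → H → Prop) : Prop :=
  ∀ u w f g : H, Rel u w → Rel f g → (inner ℂ w f : ℂ) = (inner ℂ u g : ℂ)

/-- Selfadjointness of the operator with graph relation `Rel`. -/
def IsSelfAdjRel (Rel : H → H → Prop) : Prop :=
  ∀ u w : H, Rel u w ↔ AdjRel Rel u w

/-- The operator with graph relation `Rel`, shifted by `lam`, is semi-Fredholm:
closed range, and finite-dimensional kernel or finite-codimensional range. -/
def SemiFredholmAt (Rel : H → H → Prop) (lam : ℂ) : Prop :=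
  IsClosed {v : H | ∃ u w, Rel u w ∧ v = w - lam • u} ∧
  ((∃ t : Finset H, {u : H | Rel u (lam • u)} ⊆ (Submodule.span ℂ (t : Set H) : Set H)) ∨
   (∃ t : Finset H,
      Submodule.span ℂ ((t : Set H) ∪ {v : H | ∃ u w, Rel u w ∧ v = w - lam • u}) = ⊤))

/-- The essential spectrum: points where the operator is not semi-Fredholm. -/
def EssSpec (Rel : H → H → Prop) : Set ℂ := {lam | ¬ SemiFredholmAt Rel lam}

/-- The `k`-th approximation number (`= (k+1)`-th singular value) of a bounded operator
between Hilbert spaces: the distance to operators of rank at most `k`. -/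
def sNum (T : H →L[ℂ] G) (k : ℕ) : ℝ :=
  ⨅ F : {F : H →L[ℂ] G // LinearMap.rank F.toLinearMap ≤ (k : Cardinal)}, ‖T - (F : H →L[ℂ] G)‖

/-- Membership in the Schatten–von Neumann ideal `S_p`: the singular values are
`p`-summable. -/
def MemSchatten (p : ℝ) (T : H →L[ℂ] G) : Prop :=
  IsCompactOperator ⇑T ∧ Summable (fun k : ℕ => sNum T k ^ p)

/-- Membership in the weak Schatten–von Neumann ideal `S_{p,∞}`:
`s_k(T) = O(k^{-1/p})`. -/
def MemWeakSchatten (p : ℝ) (T : H →L[ℂ] G) : Prop :=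
  IsCompactOperator ⇑T ∧ ∃ C : ℝ, ∀ k : ℕ, sNum T k ≤ C * ((k : ℝ) + 1) ^ (-(1 / p))

/-- `U` is the strongly continuous unitary group `t ↦ e^{-itA}` generated by the
selfadjoint operator `A` with graph relation `Rel`. -/
def IsUnitaryGroupFor (Rel : H → H → Prop) (U : ℝ → (H →L[ℂ] H)) : Prop :=
  U 0 = 1 ∧ (∀ s t : ℝ, U (s + t) = (U s).comp (U t)) ∧
  (∀ (t : ℝ) (f : H), ‖U t f‖ = ‖f‖) ∧
  (∀ f : H, Continuous fun t : ℝ => U t f) ∧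
  (∀ u w : H, Rel u w → ∀ t : ℝ, HasDerivAt (fun s : ℝ => U s u) ((-Complex.I) • (U t w)) t)

/-- `f` belongs to the absolutely continuous subspace of the selfadjoint operator
generating the unitary group `U`: its spectral measure `μ_f`, whose Fourier–Stieltjes
transform is `t ↦ ⟪f, U(t) f⟫`, has an integrable density w.r.t. Lebesgue measure. -/
def InAc (U : ℝ → (H →L[ℂ] H)) (f : H) : Prop :=
  ∃ h : ℝ → ℝ, Integrable h ∧ (∀ x, 0 ≤ h x) ∧
    ∀ t : ℝ, (inner ℂ f (U t f) : ℂ) = ∫ x : ℝ, Complex.exp ((-Complex.I) * t * x) * (h x : ℂ)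

/-- `lam` is in the resolvent set of the absolutely continuous part (the restriction to
the absolutely continuous subspace) of the operator with graph relation `Rel`. -/
def AcResolventAt (Rel : H → H → Prop) (U : ℝ → (H →L[ℂ] H)) (lam : ℂ) : Prop :=
  ∃ R : H →L[ℂ] H,
    (∀ f : H, InAc U f → InAc U (R f) ∧ Rel (R f) (f + lam • R f)) ∧
    (∀ u w : H, Rel u w → InAc U u → R (w - lam • u) = u)

/-- `W` is a complete wave operator for the pair of unitary groups `U₁`, `U₂` along the
filter `l` (`atTop` for `W₊`, `atBot` for `W₋`): the strong limits
`lim U₂(t)* U₁(t) f` exist on the absolutely continuous subspace of the first operator,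
`W` is isometric there, and its range is the absolutely continuous subspace of the
second operator. -/
def WaveProps (U₁ U₂ : ℝ → (H →L[ℂ] H)) (l : Filter ℝ) (W : H →L[ℂ] H) : Prop :=
  (∀ f : H, InAc U₁ f → Tendsto (fun t : ℝ => U₂ (-t) (U₁ t f)) l (𝓝 (W f))) ∧
  (∀ f : H, InAc U₁ f → ‖W f‖ = ‖f‖ ∧ InAc U₂ (W f)) ∧
  (∀ g : H, InAc U₂ g → ∃ f : H, InAc U₁ f ∧ W f = g)

/-- `V` implements a unitary equivalence between the absolutely continuous parts of the
operators generating `U₁` and `U₂`. -/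
def AcUnitEquiv (U₁ U₂ : ℝ → (H →L[ℂ] H)) (V : H →L[ℂ] H) : Prop :=
  (∀ f : H, InAc U₁ f → ‖V f‖ = ‖f‖ ∧ InAc U₂ (V f)) ∧
  (∀ g : H, InAc U₂ g → ∃ f : H, InAc U₁ f ∧ V f = g) ∧
  (∀ (t : ℝ) (f : H), InAc U₁ f → V (U₁ t f) = U₂ t (V f))

/-- The spectrum of the operator with graph relation `Rel`. -/
def SpecOf (Rel : H → H → Prop) : Set ℂ := {lam | ¬ RelInResolvent Rel lam}

/-- `u` is a generalized eigenvector (root vector) at `lam`: `(A - lam)^k u = 0`. -/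
def RootVec (Rel : H → H → Prop) (lam : ℂ) (u : H) : Prop :=
  ∃ (k : ℕ) (c : ℕ → H), c 0 = u ∧ c k = 0 ∧
    ∀ j, j < k → ∃ w, Rel (c j) w ∧ c (j + 1) = w - lam • c j

/-- The algebraic multiplicity of `lam`: the dimension of the space of root vectors,
expressed as the least cardinality of a finite spanning set. -/
def AlgMult (Rel : H → H → Prop) (lam : ℂ) : ℕ :=
  sInf {k : ℕ | ∃ t : Finset H, t.card = k ∧
    {u : H | RootVec Rel lam u} ⊆ (Submodule.span ℂ (t : Set H) : Set H)}

/-- The discrete spectrum: isolated eigenvalues of finite algebraic multiplicity. -/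
def DiscSpec (Rel : H → H → Prop) : Set ℂ :=
  {lam | lam ∈ SpecOf Rel ∧
    (∃ ε : ℝ, 0 < ε ∧ ∀ z ∈ SpecOf Rel, dist z lam < ε → z = lam) ∧
    (∃ u : H, u ≠ 0 ∧ Rel u (lam • u)) ∧
    ∃ t : Finset H, {u : H | RootVec Rel lam u} ⊆ (Submodule.span ℂ (t : Set H) : Set H)}

end Abstract

end RobinHS

namespace RobinHS

set_option linter.unusedSectionVars false

section AbstractLemmas

variable {H G : Type*} [NormedAddCommGroup H] [InnerProductSpace ℂ H] [CompleteSpace H]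
  [NormedAddCommGroup G] [InnerProductSpace ℂ G] [CompleteSpace G]

lemma sNum_le_of_rank (T F : H →L[ℂ] G) (k : ℕ)
    (hF : LinearMap.rank F.toLinearMap ≤ (k : Cardinal)) : sNum T k ≤ ‖T - F‖ := by
  unfold sNum
  exact ciInf_le (f := fun F : {F : H →L[ℂ] G // LinearMap.rank F.toLinearMap ≤ (k : Cardinal)} =>
    ‖T - (F : H →L[ℂ] G)‖) ⟨0, by rintro _ ⟨F, rfl⟩; exact norm_nonneg _⟩ ⟨F, hF⟩

lemma sNum_nonneg (T : H →L[ℂ] G) (k : ℕ) : 0 ≤ sNum T k :=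
  Real.iInf_nonneg fun _ => norm_nonneg _

lemma greedy (T : H →L[ℂ] G) (k : ℕ) (c : ℝ) (hc0 : 0 ≤ c) (hc : c < sNum T k) :
    ∀ m : ℕ, m ≤ k + 1 → ∃ e : Fin m → H, Orthonormal ℂ e ∧ ∀ j, c ≤ ‖T (e j)‖ := by
  intro m
  induction m with
  | zero => 
    intro _
    exact ⟨fun j => j.elim0, ⟨fun j => j.elim0, fun j => j.elim0⟩, fun j => j.elim0⟩
  | succ m ih =>
    intro hm
    obtain ⟨e, he, hTe⟩ := ih (by omega)
    set V : Submodule ℂ H := Submodule.span ℂ (Set.range e) with hV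
    have : FiniteDimensional ℂ V := FiniteDimensional.span_of_finite ℂ (Set.finite_range e)
    set F : H →L[ℂ] G := T.comp V.starProjection with hF
    have hrank : LinearMap.rank F.toLinearMap ≤ (k : Cardinal) := by
      have h2 : LinearMap.range F.toLinearMap ≤ Submodule.span ℂ (Set.range (T ∘ e)) := by
        rintro _ ⟨x, rfl⟩
        have h3 : T (V.starProjection x) ∈ V.map T.toLinearMap :=
          ⟨_, Submodule.starProjection_apply_mem V x, rfl⟩
        have h6 : V.map T.toLinearMap = Submodule.span ℂ (Set.range (T ∘ e)) := by
          rw [hV, Submodule.map_span, ← Set.range_comp]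
          rfl
        rw [h6] at h3
        exact h3
      have h4 : Module.rank ℂ (Submodule.span ℂ (Set.range (T ∘ e))) ≤ (m : Cardinal) := by
        refine (rank_span_le (R := ℂ) (Set.range (T ∘ e))).trans ?_
        have := Cardinal.mk_range_le_lift (f := T ∘ e)
        simpa using this
      have h5 : (m : Cardinal) ≤ (k : Cardinal) := by exact_mod_cast (by omega : m ≤ k)
      exact (Submodule.rank_mono h2).trans (h4.trans h5)
    have hn : c < ‖T - F‖ := hc.trans_le (sNum_le_of_rank T F k hrank)
    obtain ⟨x, hx⟩ : ∃ x, c * ‖x‖ < ‖(T - F) x‖ := by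
      by_contra! h
      exact absurd (ContinuousLinearMap.opNorm_le_bound _ hc0 h) (not_le.mpr hn)
    set z := x - V.starProjection x with hz
    have hTz : (T - F) x = T z := by simp [hF, hz]
    have hzV : z ∈ Vᗮ := Submodule.sub_starProjection_mem_orthogonal x
    have hzx : ‖z‖ ≤ ‖x‖ := by
      have := Submodule.norm_starProjection_apply_le Vᗮ x
      rwa [Submodule.starProjection_orthogonal_val] at this
    rw [hTz] at hx
    have hz0 : z ≠ 0 := by
      intro h0
      rw [h0] at hx
      simp at hx
      exact absurd hx (not_lt.mpr (by positivity))
    have hzn : 0 < ‖z‖ := norm_pos_iff.mpr hz0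
    have hort : ∀ j, inner ℂ (e j) z = 0 := fun j =>
      (Submodule.mem_orthogonal V z).1 hzV _ (Submodule.subset_span ⟨j, rfl⟩)
    have hort' : ∀ j, inner ℂ z (e j) = 0 := fun j =>
      inner_eq_zero_symm.1 (hort j)
    refine ⟨Fin.snoc (α := fun _ => H) e (((‖z‖⁻¹ : ℝ) : ℂ) • z), ⟨?_, ?_⟩, ?_⟩
    · intro j
      refine Fin.lastCases ?_ (fun i => ?_) j
      · simp [norm_smul, hzn.ne']
      · simpa using he.1 i
    · intro i j
      refine Fin.lastCases ?_ (fun i => ?_) i <;> refine Fin.lastCases ?_ (fun j => ?_) j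
      · intro h; exact absurd rfl h
      · intro _; simp [inner_smul_left, hort']
      · intro _; simp [inner_smul_right, hort]
      · intro h; simpa using he.2 (fun hij => h (by rw [hij]))
    · intro j
      refine Fin.lastCases ?_ (fun i => ?_) j
      · simp only [Fin.snoc_last, map_smul, norm_smul, Complex.norm_real, norm_inv, norm_norm]
        rw [inv_mul_eq_div, le_div_iff₀ hzn]
        exact (mul_le_mul_of_nonneg_left hzx hc0).trans hx.le
      · simpa using hTe i

lemma sNum_sq_le (T : H →L[ℂ] G) (k : ℕ) (D : ℝ)
    (hD : ∀ e : Fin (k + 1) → H, Orthonormal ℂ e → ∑ j, ‖T (e j)‖ ^ 2 ≤ (k + 1) * D) :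
    sNum T k ≤ Real.sqrt D := by
  by_contra! h
  obtain ⟨c, hc1, hc2⟩ := exists_between h
  have hc0 : 0 ≤ c := (Real.sqrt_nonneg D).trans hc1.le
  obtain ⟨e, he, hTe⟩ := greedy T k c hc0 hc2 (k + 1) le_rfl
  have h1 := hD e he
  have h2 : ((k : ℝ) + 1) * c ^ 2 ≤ ∑ j, ‖T (e j)‖ ^ 2 := by
    calc ((k : ℝ) + 1) * c ^ 2 = ∑ j : Fin (k + 1), c ^ 2 := by simp
      _ ≤ _ := Finset.sum_le_sum fun j _ => by gcongr; exact hTe j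
  have h3 : D < c ^ 2 := (Real.sqrt_lt' (lt_of_le_of_lt (Real.sqrt_nonneg D) hc1)).1 hc1
  have : ((k : ℝ) + 1) * D < (k + 1) * c ^ 2 := by gcongr
  linarith

lemma memSchatten_of_le (T : H →L[ℂ] G) (C q r : ℝ) (hq : 0 < q) (hr : 0 < r) (hqr : 1 < q * r)
    (h : ∀ k : ℕ, sNum T k ≤ C * ((k : ℝ) + 1) ^ (-q)) : MemSchatten r T := by
  have hC : 0 ≤ C := by simpa using (sNum_nonneg T 0).trans (h 0)
  refine ⟨?_, ?_⟩
  · have hF : ∀ k : ℕ, ∃ F : H →L[ℂ] G, IsCompactOperator F ∧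
        ‖T - F‖ ≤ C * ((k : ℝ) + 1) ^ (-q) + ((k : ℝ) + 1) ^ (-q) := by
      intro k
      have hpos : 0 < ((k : ℝ) + 1) ^ (-q) := by positivity
      have hlt : sNum T k < C * ((k : ℝ) + 1) ^ (-q) + ((k : ℝ) + 1) ^ (-q) := by
        linarith [h k]
      have : Nonempty {F : H →L[ℂ] G // LinearMap.rank F.toLinearMap ≤ (k : Cardinal)} :=
        ⟨⟨0, by simp [LinearMap.rank_zero]⟩⟩
      obtain ⟨⟨F, hFr⟩, hF⟩ := exists_lt_of_ciInf_lt hlt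
      refine ⟨F, ?_, hF.le⟩
      have hfin : FiniteDimensional ℂ (LinearMap.range F.toLinearMap) := by
        rw [FiniteDimensional, ← Module.rank_lt_aleph0_iff]
        exact lt_of_le_of_lt hFr (Cardinal.natCast_lt_aleph0)
      have hloc : LocallyCompactSpace (LinearMap.range F.toLinearMap) :=
        have := FiniteDimensional.proper ℂ (LinearMap.range F.toLinearMap)
        inferInstance
      set F' := F.codRestrict (LinearMap.range F.toLinearMap) (fun x => ⟨x, rfl⟩)
      have h1 : IsCompactOperator F' := isCompactOperator_of_locallyCompactSpace_dom F'
      exact h1.clm_comp (LinearMap.range F.toLinearMap).subtypeL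
    choose F hFc hFn using hF
    refine isCompactOperator_of_tendsto (F := F) (l := atTop) ?_ (Eventually.of_forall hFc)
    rw [tendsto_iff_norm_sub_tendsto_zero]
    have ht : Tendsto (fun k : ℕ => ((k : ℝ) + 1) ^ (-q)) atTop (𝓝 0) :=
      (tendsto_rpow_neg_atTop hq).comp
        (tendsto_atTop_add_const_right _ _ tendsto_natCast_atTop_atTop)
    refine squeeze_zero (fun k => norm_nonneg _) (fun k => ?_)
      (by simpa using (ht.const_mul C).add ht)
    rw [norm_sub_rev]
    exact hFn k
  · have hs : Summable (fun k : ℕ => C ^ r * ((k : ℝ) + 1) ^ (-(q * r))) := by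
      refine Summable.mul_left _ ?_
      have := (summable_nat_add_iff 1).mpr (Real.summable_nat_rpow (p := -(q*r)) |>.mpr (by linarith))
      simpa using this
    refine Summable.of_nonneg_of_le (fun k => Real.rpow_nonneg (sNum_nonneg T k) _) (fun k => ?_) hs
    calc sNum T k ^ r ≤ (C * ((k : ℝ) + 1) ^ (-q)) ^ r :=
          Real.rpow_le_rpow (sNum_nonneg T k) (h k) hr.le
      _ = _ := by
          rw [Real.mul_rpow hC (by positivity), ← Real.rpow_mul (by positivity)]
          ring_nf

end AbstractLemmas
section FourierLemmas

open scoped FourierTransform SchwartzMap ContDiff LineDeriv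

variable {n : ℕ}

lemma fourier_pair (f : Hbd n) (φ : 𝓢(Bdy n, ℂ)) :
    ∫ x, φ x * (𝓕 f : Hbd n) x = ∫ x, (𝓕 φ) x * f x := by
  have h := congrArg (fun S => S φ) (Lp.fourier_toTemperedDistribution_eq f)
  simp only [TemperedDistribution.fourier_apply, Lp.toTemperedDistribution_apply] at h
  simpa using h.symm

lemma fourierInv_pair (f : Hbd n) (φ : 𝓢(Bdy n, ℂ)) :
    ∫ x, φ x * (𝓕⁻ f : Hbd n) x = ∫ x, (𝓕⁻ φ) x * f x := by
  have h := congrArg (fun S => S φ) (Lp.fourierInv_toTemperedDistribution_eq f)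
  simp only [TemperedDistribution.fourierInv_apply, Lp.toTemperedDistribution_apply] at h
  simpa using h.symm

lemma ae_eq_of_test {f g : Bdy n → ℂ} (hf : LocallyIntegrable f) (hg : LocallyIntegrable g)
    (h : ∀ φ : 𝓢(Bdy n, ℂ), HasCompactSupport φ → ∫ x, φ x * f x = ∫ x, φ x * g x) :
    f =ᵐ[volume] g := by
  refine ae_eq_of_integral_contDiff_smul_eq hf hg fun ψ hψ hψc => ?_
  have h1 : HasCompactSupport (fun x => (ψ x : ℂ)) := hψc.comp_left (g := fun r : ℝ => (r : ℂ)) (by simp)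
  have h2 : ContDiff ℝ ∞ (fun x => (ψ x : ℂ)) := Complex.ofRealCLM.contDiff.comp hψ
  have := h (h1.toSchwartzMap h2) h1
  simpa using this

lemma locInt_Lp (f : Hbd n) : LocallyIntegrable f :=
  (Lp.memLp f).locallyIntegrable (by norm_num)

lemma fourierInv_ae (f : Hbd n) (hf : Integrable f) :
    ⇑(𝓕⁻ f : Hbd n) =ᵐ[volume] fun x => 𝓕⁻ (⇑f) x := by
  have hcont : Continuous (fun x => 𝓕⁻ (⇑f) x) := by
    have : (fun x => 𝓕⁻ (⇑f) x) = fun x => 𝓕 (⇑f) (-x) := by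
      ext x; rw [Real.fourierInv_eq_fourier_neg]
    rw [this]
    exact (VectorFourier.fourierIntegral_continuous Real.continuous_fourierChar
      (by exact continuous_inner) hf).comp continuous_neg
  refine ae_eq_of_test (locInt_Lp _) hcont.locallyIntegrable fun φ _ => ?_
  rw [fourierInv_pair]
  have h1 : ∀ x, (𝓕⁻ φ) x = 𝓕 (⇑φ) (-x) := fun x => by
    rw [SchwartzMap.fourierInv_apply_eq]; rfl
  have h2 : ∀ x, 𝓕⁻ (⇑f) x = 𝓕 (⇑f) (-x) := fun x => by
    rw [Real.fourierInv_eq_fourier_neg]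
  simp only [h1, h2]
  have key := VectorFourier.integral_fourierIntegral_smul_eq_flip (μ := (volume : Measure (Bdy n)))
    (ν := (volume : Measure (Bdy n))) (L := -innerₗ (Bdy n)) (f := ⇑φ) (g := ⇑f)
    Real.continuous_fourierChar (by exact (continuous_inner (𝕜 := ℝ) (E := Bdy n)).neg) φ.integrable hf
  simp only [smul_eq_mul] at key
  have k1 : ∀ x, VectorFourier.fourierIntegral Real.fourierChar volume (-innerₗ (Bdy n)) (⇑φ) x
      = 𝓕 (⇑φ) (-x) := fun x => by
    simp [Real.fourier_eq, VectorFourier.fourierIntegral]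
  have k2 : ∀ x, VectorFourier.fourierIntegral Real.fourierChar volume (-innerₗ (Bdy n)).flip (⇑f) x
      = 𝓕 (⇑f) (-x) := fun x => by
    simp [Real.fourier_eq, VectorFourier.fourierIntegral, real_inner_comm]
  simp only [k1, k2] at key
  exact key

lemma int_mul {f g : Bdy n → ℂ} (hf : MemLp f 2 volume) (hg : MemLp g 2 volume) :
    Integrable (fun y => f y * g y) := hf.integrable_mul hg

lemma weakDeriv_compact {v : Bdy n} {f g : Bdy n → ℂ} (hf : MemLp f 2 volume)
    (hg : MemLp g 2 volume) (h : IsWeakDerivB n v f g) (φ : Bdy n → ℂ)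
    (hφ : ContDiff ℝ ∞ φ) (hφc : HasCompactSupport φ) :
    ∫ y, f y * fderiv ℝ φ y v = - ∫ y, g y * φ y := by
  have hd : ∀ y, DifferentiableAt ℝ φ y := fun y => (hφ.differentiable (by simp)) y
  have hre : IsTestB n (fun y => (φ y).re) :=
    ⟨Complex.reCLM.contDiff.comp hφ, hφc.comp_left (g := Complex.re) (by simp)⟩
  have him : IsTestB n (fun y => (φ y).im) :=
    ⟨Complex.imCLM.contDiff.comp hφ, hφc.comp_left (g := Complex.im) (by simp)⟩
  have dre : ∀ y, fderiv ℝ (fun y => (φ y).re) y v = (fderiv ℝ φ y v).re := fun y => by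
    have := (Complex.reCLM.hasFDerivAt.comp y (hd y).hasFDerivAt).fderiv
    exact congrArg (fun L => L v) this
  have dim : ∀ y, fderiv ℝ (fun y => (φ y).im) y v = (fderiv ℝ φ y v).im := fun y => by
    have := (Complex.imCLM.hasFDerivAt.comp y (hd y).hasFDerivAt).fderiv
    exact congrArg (fun L => L v) this
  have h1 := h _ hre
  have h2 := h _ him
  simp only [dre, dim] at h1 h2
  have hφL : MemLp φ 2 volume := hφ.continuous.memLp_of_hasCompactSupport hφc
  have hdc : Continuous fun y => fderiv ℝ φ y v :=
    (hφ.continuous_fderiv (by simp)).clm_apply continuous_const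
  have hdL : MemLp (fun y => fderiv ℝ φ y v) 2 volume :=
    hdc.memLp_of_hasCompactSupport (hφc.fderiv_apply ℝ v)
  have e1 : ∫ y, f y * fderiv ℝ φ y v = (∫ y, f y * ((fderiv ℝ φ y v).re : ℂ))
      + Complex.I * ∫ y, f y * ((fderiv ℝ φ y v).im : ℂ) := by
    rw [← integral_const_mul]
    refine Eq.trans ?_ (integral_add (int_mul hf hdL.re.ofReal)
      ((int_mul hf hdL.im.ofReal).const_mul Complex.I))
    refine integral_congr_ae (Eventually.of_forall fun y => ?_)
    dsimp only
    conv_lhs => rw [← Complex.re_add_im (fderiv ℝ φ y v)]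
    ring
  have e2 : ∫ y, g y * φ y = (∫ y, g y * ((φ y).re : ℂ))
      + Complex.I * ∫ y, g y * ((φ y).im : ℂ) := by
    rw [← integral_const_mul]
    refine Eq.trans ?_ (integral_add (int_mul hg hφL.re.ofReal)
      ((int_mul hg hφL.im.ofReal).const_mul Complex.I))
    refine integral_congr_ae (Eventually.of_forall fun y => ?_)
    dsimp only
    conv_lhs => rw [← Complex.re_add_im (φ y)]
    ring
  rw [e1, e2, h1, h2]
  ring

lemma weakDeriv_schwartz {v : Bdy n} {f g : Bdy n → ℂ} (hf : MemLp f 2 volume)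
    (hg : MemLp g 2 volume) (h : IsWeakDerivB n v f g) (φ : 𝓢(Bdy n, ℂ)) :
    ∫ y, f y * fderiv ℝ φ y v = - ∫ y, g y * φ y := by
  let χ : ContDiffBump (0 : Bdy n) := ⟨1, 2, by norm_num, by norm_num⟩
  let c : ℕ → ℝ := fun k => ((k : ℝ) + 1)⁻¹
  have hc0 : ∀ k, 0 < c k := fun k => by positivity
  have hc1 : ∀ k, c k ≤ 1 := fun k => inv_le_one_of_one_le₀ (by linarith [Nat.cast_nonneg (α := ℝ) k])
  let χk : ℕ → Bdy n → ℝ := fun k y => χ (c k • y)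
  have hχs : ∀ k, ContDiff ℝ ∞ (χk k) := fun k => χ.contDiff.comp (contDiff_const_smul _)
  have hχc : ∀ k, HasCompactSupport (χk k) := fun k =>
    χ.hasCompactSupport.comp_smul (hc0 k).ne'
  obtain ⟨M, hM⟩ : ∃ M, ∀ y, ‖fderiv ℝ χ y‖ ≤ M := by
    have hcs : HasCompactSupport (fderiv ℝ χ) := χ.hasCompactSupport.fderiv ℝ
    have hcc : Continuous (fderiv ℝ χ) := (χ.contDiff (n := ⊤)).continuous_fderiv (by simp)
    exact hcs.exists_bound_of_continuous hcc
  have hχd : ∀ k y, fderiv ℝ (χk k) y v = c k * fderiv ℝ χ (c k • y) v := by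
    intro k y
    have hd : DifferentiableAt ℝ χ (c k • y) := (χ.contDiff (n := ⊤)).differentiable (by simp) _
    have h2 : HasFDerivAt (fun y : Bdy n => c k • y) (c k • ContinuousLinearMap.id ℝ (Bdy n)) y :=
      (hasFDerivAt_id y).const_smul (c k)
    have := (hd.hasFDerivAt.comp y h2).fderiv
    have h3 := congrArg (fun L => L v) this
    refine h3.trans ?_
    simp
  have hprod : ∀ k y, fderiv ℝ (fun y => (χk k y : ℂ) * φ y) y v
      = (χk k y : ℂ) * fderiv ℝ φ y v + ((c k * fderiv ℝ χ (c k • y) v : ℝ) : ℂ) * φ y := by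
    intro k y
    have h1 : HasFDerivAt (fun y => (χk k y : ℂ)) (Complex.ofRealCLM.comp (fderiv ℝ (χk k) y)) y :=
      Complex.ofRealCLM.hasFDerivAt.comp y ((hχs k).differentiable (by simp) y).hasFDerivAt
    have h2 := (h1.mul φ.differentiableAt.hasFDerivAt).fderiv
    have h3 := congrArg (fun L => L v) h2
    rw [← hχd]
    refine h3.trans ?_
    simp
    ring
  have hk : ∀ k, ∫ y, f y * ((χk k y : ℂ) * fderiv ℝ φ y v
      + ((c k * fderiv ℝ χ (c k • y) v : ℝ) : ℂ) * φ y) = - ∫ y, g y * ((χk k y : ℂ) * φ y) := by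
    intro k
    have := weakDeriv_compact hf hg h (fun y => (χk k y : ℂ) * φ y)
      ((Complex.ofRealCLM.contDiff.comp (hχs k)).mul (φ.smooth ⊤))
      (((hχc k).comp_left (g := fun r : ℝ => (r : ℂ)) (by simp)).mul_right)
    simpa only [hprod] using this
  have hφL : MemLp φ 2 volume := φ.memLp 2
  have hdL : MemLp (fun y => fderiv ℝ φ y v) 2 volume := by
    have h0 := (∂_{v} φ : 𝓢(Bdy n, ℂ)).memLp 2 volume
    exact h0
  have hχle : ∀ k y, |χk k y| ≤ 1 := fun k y => by
    rw [abs_of_nonneg χ.nonneg]; exact χ.le_one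
  have hct : Tendsto c atTop (𝓝 0) := tendsto_inv_atTop_zero.comp
        (tendsto_atTop_add_const_right _ _ tendsto_natCast_atTop_atTop)
  have hχt : ∀ y, Tendsto (fun k => χk k y) atTop (𝓝 1) := fun y => by
    have h1 : Tendsto (fun k => c k • y) atTop (𝓝 0) := by simpa using hct.smul_const y
    have h2 := (χ.continuous.tendsto 0).comp h1
    rwa [χ.one_of_mem_closedBall (by simp [χ])] at h2
  have t1 : Tendsto (fun k => ∫ y, f y * ((χk k y : ℂ) * fderiv ℝ φ y v
      + ((c k * fderiv ℝ χ (c k • y) v : ℝ) : ℂ) * φ y)) atTop (𝓝 (∫ y, f y * fderiv ℝ φ y v)) := by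
    refine tendsto_integral_of_dominated_convergence
      (fun y => ‖f y * fderiv ℝ φ y v‖ + (M * ‖v‖) * ‖f y * φ y‖) ?_ ?_ ?_ ?_
    · intro k
      refine hf.1.mul ?_
      have h1 : Continuous fun y => (χk k y : ℂ) := Complex.continuous_ofReal.comp (hχs k).continuous
      have h2 : Continuous fun y => ((c k * fderiv ℝ χ (c k • y) v : ℝ) : ℂ) := by
        have hcc : Continuous (fderiv ℝ χ) := (χ.contDiff (n := ⊤)).continuous_fderiv (by simp)
        fun_prop
      exact (h1.aestronglyMeasurable.mul hdL.1).add (h2.aestronglyMeasurable.mul hφL.1)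
    · exact (int_mul hf hdL).norm.add ((int_mul hf hφL).norm.const_mul _)
    · intro k
      refine Eventually.of_forall fun y => ?_
      rw [mul_add]
      refine (norm_add_le _ _).trans ?_
      have hb : |c k * fderiv ℝ χ (c k • y) v| ≤ M * ‖v‖ := by
        rw [abs_mul, abs_of_pos (hc0 k)]
        have h1 : |fderiv ℝ χ (c k • y) v| ≤ M * ‖v‖ :=
          ((fderiv ℝ χ (c k • y)).le_opNorm v).trans (by gcongr; exact hM _)
        calc c k * |fderiv ℝ χ (c k • y) v| ≤ 1 * (M * ‖v‖) := by
              gcongr; exact hc1 k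
          _ = _ := one_mul _
      have i1 : ‖f y * ((χk k y : ℂ) * fderiv ℝ φ y v)‖ ≤ ‖f y * fderiv ℝ φ y v‖ := by
        simp only [norm_mul, Complex.norm_real, Real.norm_eq_abs]
        have := hχle k y
        calc _ ≤ ‖f y‖ * (1 * ‖fderiv ℝ φ y v‖) := by gcongr
          _ = _ := by ring
      have i2 : ‖f y * (((c k * fderiv ℝ χ (c k • y) v : ℝ) : ℂ) * φ y)‖
          ≤ (M * ‖v‖) * ‖f y * φ y‖ := by
        rw [norm_mul, norm_mul, norm_mul, Complex.norm_real, Real.norm_eq_abs]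
        calc _ ≤ ‖f y‖ * ((M * ‖v‖) * ‖φ y‖) := by gcongr
          _ = _ := by ring
      exact add_le_add i1 i2
    · refine Eventually.of_forall fun y => ?_
      have a1 : Tendsto (fun k => (χk k y : ℂ)) atTop (𝓝 1) :=
        (Complex.continuous_ofReal.tendsto 1).comp (hχt y)
      have a2 : Tendsto (fun k => ((c k * fderiv ℝ χ (c k • y) v : ℝ) : ℂ)) atTop (𝓝 0) := by
        have hcc : Continuous (fderiv ℝ χ) := (χ.contDiff (n := ⊤)).continuous_fderiv (by simp)
        have h1 : Tendsto (fun k => c k • y) atTop (𝓝 0) := by simpa using hct.smul_const y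
        have h2 : Continuous fun y => fderiv ℝ χ y v := by fun_prop
        have h3 := hct.mul ((h2.tendsto 0).comp h1)
        have h4 := (Complex.continuous_ofReal.tendsto _).comp h3
        simpa [Function.comp_def] using h4
      have := ((a1.mul_const (fderiv ℝ φ y v)).add (a2.mul_const (φ y))).const_mul (f y)
      simpa using this
  have t2 : Tendsto (fun k => - ∫ y, g y * ((χk k y : ℂ) * φ y)) atTop (𝓝 (-∫ y, g y * φ y)) := by
    refine Tendsto.neg ?_
    refine tendsto_integral_of_dominated_convergence (fun y => ‖g y * φ y‖) ?_ ?_ ?_ ?_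
    · intro k
      have h1 : Continuous fun y => (χk k y : ℂ) := Complex.continuous_ofReal.comp (hχs k).continuous
      exact hg.1.mul (h1.aestronglyMeasurable.mul hφL.1)
    · exact (int_mul hg hφL).norm
    · intro k
      refine Eventually.of_forall fun y => ?_
      simp only [norm_mul, Complex.norm_real, Real.norm_eq_abs]
      have := hχle k y
      calc _ ≤ ‖g y‖ * (1 * ‖φ y‖) := by gcongr
        _ = _ := by ring
    · refine Eventually.of_forall fun y => ?_
      have a1 : Tendsto (fun k => (χk k y : ℂ)) atTop (𝓝 1) :=
        (Complex.continuous_ofReal.tendsto 1).comp (hχt y)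
      simpa using (a1.mul_const (φ y)).const_mul (g y)
  simp only [hk] at t1
  exact tendsto_nhds_unique t1 t2

lemma fourier_weakDeriv {v : Bdy n} {f g : Hbd n} (h : IsWeakDerivB n v f g) :
    ⇑(𝓕 g : Hbd n) =ᵐ[volume]
      fun ξ => (2 * Real.pi * Complex.I) * ((inner ℝ ξ v : ℝ) : ℂ) * (𝓕 f : Hbd n) ξ := by
  have h1 : Lp.toTemperedDistribution g = ∂_{v} (Lp.toTemperedDistribution f) := by
    ext φ
    have := weakDeriv_schwartz (Lp.memLp f) (Lp.memLp g) h φ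
    simp only [TemperedDistribution.lineDerivOp_apply_apply, map_neg,
      Lp.toTemperedDistribution_apply, smul_eq_mul, SchwartzMap.lineDerivOp_apply_eq_fderiv]
    simp only [mul_comm] at this ⊢
    rw [this, neg_neg]
  have h2 := congrArg (fun S => 𝓕 S) h1
  simp only [TemperedDistribution.fourier_lineDerivOp_eq, Lp.fourier_toTemperedDistribution_eq] at h2
  have hc : Continuous fun ξ : Bdy n => (2 * Real.pi * Complex.I) * ((inner ℝ ξ v : ℝ) : ℂ) := by
    fun_prop
  refine ae_eq_of_test (locInt_Lp _) ?_ ?_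
  · exact (locInt_Lp _).continuous_mul hc
  intro φ _
  have h3 := congrArg (fun S => S φ) h2
  have ht : (fun x : Bdy n => ((inner ℝ x v : ℝ) : ℂ)).HasTemperateGrowth := by fun_prop
  simp [SchwartzMap.smulLeftCLM_apply_apply ht] at h3
  rw [h3, ← integral_const_mul]
  congr 1; ext x; ring

end FourierLemmas
section Translation

open scoped FourierTransform SchwartzMap ContDiff ENNReal

variable {n : ℕ}

lemma lint_sq {f : Bdy n → ℂ} : ∫⁻ x, ‖f x‖ₑ ^ 2 = eLpNorm f 2 volume ^ 2 := by
  have h := eLpNorm_nnreal_pow_eq_lintegral (p := 2) (f := f) (μ := (volume : Measure (Bdy n)))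
    (by norm_num)
  simp only [NNReal.coe_ofNat, ENNReal.rpow_ofNat] at h
  rw [← h]; rfl

lemma lint_sq_Lp (f : Hbd n) : ∫⁻ x, ‖f x‖ₑ ^ 2 = ‖f‖ₑ ^ 2 := by
  rw [lint_sq, Lp.enorm_def]

lemma fourier_translate (g : Hbd n) (h : Bdy n) :
    ∫⁻ x, ‖g (x + h) - g x‖ₑ ^ 2 =
      ∫⁻ ξ, ‖((Real.fourierChar (inner ℝ ξ h) : Circle) : ℂ) - 1‖ₑ ^ 2 * ‖(𝓕 g : Hbd n) ξ‖ₑ ^ 2 := by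
  have hτ : MemLp (fun x => g (x + h)) 2 volume :=
    (Lp.memLp g).comp_measurePreserving (measurePreserving_add_right volume h)
  have hm : MemLp (fun x => g (x + h) - g x) 2 volume := hτ.sub (Lp.memLp g)
  set G : Hbd n := hm.toLp _ with hG
  have hGae : ⇑G =ᵐ[volume] fun x => g (x + h) - g x := hm.coeFn_toLp
  have hE : ContDiff ℝ ∞ fun ξ : Bdy n => ((Real.fourierChar (inner ℝ ξ h) : Circle) : ℂ) := by
    simp only [Real.fourierChar_apply]
    have h1 : ContDiff ℝ ∞ fun ξ : Bdy n => (((2 * Real.pi * inner ℝ ξ h : ℝ)) : ℂ) :=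
      Complex.ofRealCLM.contDiff.comp (contDiff_const.mul (contDiff_id.inner ℝ contDiff_const))
    exact (h1.mul contDiff_const).cexp
  have key : ⇑(𝓕 G : Hbd n) =ᵐ[volume]
      fun ξ => (((Real.fourierChar (inner ℝ ξ h) : Circle) : ℂ) - 1) * (𝓕 g : Hbd n) ξ := by
    refine ae_eq_of_test (locInt_Lp _) ?_ ?_
    · exact (locInt_Lp _).continuous_mul (hE.continuous.sub continuous_const)
    intro φ hφ
    rw [fourier_pair]
    have hψc : HasCompactSupport (fun ξ => ((Real.fourierChar (inner ℝ ξ h) : Circle) : ℂ) * φ ξ) :=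
      hφ.mul_left
    set ψ : 𝓢(Bdy n, ℂ) := hψc.toSchwartzMap (hE.mul (φ.smooth ⊤)) with hψ
    have hψa : ∀ ξ, ψ ξ = ((Real.fourierChar (inner ℝ ξ h) : Circle) : ℂ) * φ ξ := fun ξ => rfl
    have hFψ : ∀ x, (𝓕 ψ) x = (𝓕 φ) (x - h) := by
      intro x
      rw [SchwartzMap.fourier_coe, SchwartzMap.fourier_coe, Real.fourier_eq, Real.fourier_eq]
      refine integral_congr_ae (Eventually.of_forall fun y => ?_)
      simp only [hψa, Circle.smul_def, smul_eq_mul]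
      rw [← mul_assoc, ← Circle.coe_mul, ← AddChar.map_add_eq_mul, inner_sub_right]
      congr 4; ring
    have hφL : MemLp (𝓕 φ : 𝓢(Bdy n, ℂ)) 2 volume := SchwartzMap.memLp _ 2 volume
    have hφL' : MemLp φ 2 volume := SchwartzMap.memLp _ 2 volume
    have hψL' : MemLp ψ 2 volume := SchwartzMap.memLp _ 2 volume
    have e1 : ∫ x, (𝓕 φ) x * G x = (∫ x, (𝓕 φ) x * g (x + h)) - ∫ x, (𝓕 φ) x * g x := by
      rw [← integral_sub (int_mul hφL hτ) (int_mul hφL (Lp.memLp g))]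
      refine integral_congr_ae ?_
      filter_upwards [hGae] with x hx
      rw [hx]; ring
    have e2 : ∫ x, (𝓕 φ) x * g (x + h) = ∫ x, (𝓕 ψ) x * g x := by
      refine Eq.trans ?_ (integral_add_right_eq_self (fun x => (𝓕 ψ) x * g x) h)
      simp [hFψ]
    rw [e1, e2, ← fourier_pair, ← fourier_pair,
      ← integral_sub (int_mul hψL' (Lp.memLp _)) (int_mul hφL' (Lp.memLp _))]
    refine integral_congr_ae (Eventually.of_forall fun y => ?_)
    simp only [hψa]; ring
  calc ∫⁻ x, ‖g (x + h) - g x‖ₑ ^ 2 = ∫⁻ x, ‖G x‖ₑ ^ 2 := by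
        refine lintegral_congr_ae ?_
        filter_upwards [hGae] with x hx
        rw [hx]
    _ = ∫⁻ x, ‖(𝓕 G : Hbd n) x‖ₑ ^ 2 := by
        rw [lint_sq_Lp, lint_sq_Lp, ← ofReal_norm, ← ofReal_norm, Lp.norm_fourier_eq]
    _ = _ := by
        refine lintegral_congr_ae ?_
        filter_upwards [key] with x hx
        rw [hx, enorm_mul, mul_pow]

/-- lower bound for the Gagliardo symbol -/
lemma symbol_lower (n : ℕ) : ∃ c : ℝ≥0∞, c ≠ 0 ∧ c ≠ ⊤ ∧ ∀ ξ : Bdy n,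
    c * ‖ξ‖ₑ ≤ ∫⁻ h : Bdy n, ‖((Real.fourierChar (inner ℝ ξ h) : Circle) : ℂ) - 1‖ₑ ^ 2 *
      ENNReal.ofReal ((‖h‖ ^ ((n : ℝ) + 1))⁻¹) := by
  set V := volume (Metric.ball (0 : Bdy n) 1) with hV
  have hV0 : V ≠ 0 := (Metric.measure_ball_pos _ _ one_pos).ne'
  have hVt : V ≠ ⊤ := measure_ball_lt_top.ne
  have hp : (0:ℝ) < (3/4 : ℝ) ^ ((n : ℝ) + 1) := by positivity
  refine ⟨ENNReal.ofReal ((4⁻¹) ^ n * ((3/4 : ℝ) ^ ((n : ℝ) + 1))⁻¹) * V, ?_, ?_, ?_⟩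
  · refine mul_ne_zero ?_ hV0
    rw [Ne, ENNReal.ofReal_eq_zero, not_le]; positivity
  · exact ENNReal.mul_ne_top ENNReal.ofReal_ne_top hVt
  intro ξ
  by_cases hξ : ξ = 0
  · simp [hξ]
  have ht : 0 < ‖ξ‖ := norm_pos_iff.2 hξ
  set t := ‖ξ‖ with htd
  set x₀ : Bdy n := (2 * t ^ 2)⁻¹ • ξ with hx₀
  have hx₀n : ‖x₀‖ = (2 * t)⁻¹ := by
    rw [hx₀, norm_smul, ← htd, Real.norm_of_nonneg (by positivity)]; field_simp
  have hin : inner ℝ ξ x₀ = 1/2 := by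
    rw [hx₀, inner_smul_right, real_inner_self_eq_norm_sq, ← htd]; field_simp
  have hball : ∀ h ∈ Metric.ball x₀ ((4 * t)⁻¹),
      ENNReal.ofReal (((3 / (4 * t)) ^ ((n : ℝ) + 1))⁻¹) ≤
      ‖((Real.fourierChar (inner ℝ ξ h) : Circle) : ℂ) - 1‖ₑ ^ 2 *
      ENNReal.ofReal ((‖h‖ ^ ((n : ℝ) + 1))⁻¹) := by
    intro h hh
    rw [Metric.mem_ball, dist_eq_norm] at hh
    have hi : |inner ℝ ξ h - 1/2| ≤ 1/4 := by
      rw [← hin, ← inner_sub_right]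
      refine (abs_real_inner_le_norm _ _).trans ?_
      calc t * ‖h - x₀‖ ≤ t * (4 * t)⁻¹ := by gcongr
        _ = 1/4 := by field_simp
    have hn1 : ‖h‖ ≤ 3 / (4 * t) := by
      calc ‖h‖ = ‖(h - x₀) + x₀‖ := by simp
        _ ≤ (4 * t)⁻¹ + (2 * t)⁻¹ := (norm_add_le _ _).trans (by rw [hx₀n]; gcongr)
        _ = _ := by field_simp; norm_num
    have hn0 : 0 < ‖h‖ := by
      rw [norm_pos_iff]; rintro rfl
      rw [inner_zero_right] at hi; norm_num at hi
    have hE : 1 ≤ ‖((Real.fourierChar (inner ℝ ξ h) : Circle) : ℂ) - 1‖ := by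
      set s : ℝ := inner ℝ ξ h
      have hre : (((Real.fourierChar s : Circle) : ℂ) - 1).re = Real.cos (2 * Real.pi * s) - 1 := by
        rw [Real.fourierChar_apply, Complex.sub_re, Complex.exp_ofReal_mul_I_re]; simp
      have hcos : Real.cos (2 * Real.pi * s) ≤ 0 := by
        rw [abs_le] at hi
        apply Real.cos_nonpos_of_pi_div_two_le_of_le <;> nlinarith [Real.pi_pos]
      have := Complex.abs_re_le_norm (((Real.fourierChar s : Circle) : ℂ) - 1)
      rw [hre, abs_le] at this
      linarith [neg_abs_le (Real.cos (2 * Real.pi * s) - 1)]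
    have hE' : (1 : ℝ≥0∞) ≤ ‖((Real.fourierChar (inner ℝ ξ h) : Circle) : ℂ) - 1‖ₑ ^ 2 := by
      refine one_le_pow₀ ?_
      rw [← ofReal_norm, ← ENNReal.ofReal_one]
      exact ENNReal.ofReal_le_ofReal hE
    refine le_trans ?_ (mul_le_mul_left hE' _)
    rw [one_mul]
    refine ENNReal.ofReal_le_ofReal ?_
    gcongr
  calc _ = ∫⁻ h in Metric.ball x₀ ((4 * t)⁻¹),
        ENNReal.ofReal (((3 / (4 * t)) ^ ((n : ℝ) + 1))⁻¹) := by
        rw [setLIntegral_const, Measure.addHaar_ball_of_pos _ _ (by positivity), ← hV, ← mul_assoc,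
          ← ENNReal.ofReal_mul (by positivity), ← ofReal_norm, ← htd, mul_right_comm,
          ← ENNReal.ofReal_mul (by positivity)]
        congr 2
        rw [finrank_euclideanSpace, Fintype.card_fin, show 3 / (4 * t) = (3/4) * t⁻¹ by field_simp,
          Real.mul_rpow (by norm_num) (by positivity), Real.rpow_add_one (by positivity) (n:ℝ) (x := t⁻¹),
          Real.rpow_natCast, mul_inv, mul_inv, inv_inv, inv_pow, mul_inv, mul_pow, inv_pow]
        field_simp
        rw [← mul_pow]; norm_num
    _ ≤ ∫⁻ h in Metric.ball x₀ ((4 * t)⁻¹),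
          ‖((Real.fourierChar (inner ℝ ξ h) : Circle) : ℂ) - 1‖ₑ ^ 2 *
          ENNReal.ofReal ((‖h‖ ^ ((n : ℝ) + 1))⁻¹) :=
        setLIntegral_mono' Metric.isOpen_ball.measurableSet hball
    _ ≤ _ := setLIntegral_le_lintegral _ _

lemma gag_weight (g : Hbd n) (hg : GagB n g) :
    ∫⁻ ξ, ‖ξ‖ₑ * ‖(𝓕 g : Hbd n) ξ‖ₑ ^ 2 < ⊤ := by
  obtain ⟨c, hc0, hct, hc⟩ := symbol_lower n
  have hgm : AEStronglyMeasurable (⇑g) volume := Lp.aestronglyMeasurable g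
  have h1 : ∫⁻ p : Bdy n × Bdy n, ‖g p.1 - g p.2‖ₑ ^ 2 *
      ENNReal.ofReal ((‖p.1 - p.2‖ ^ ((n : ℝ) + 1))⁻¹) ∂(volume.prod volume) < ⊤ := by
    refine lt_of_eq_of_lt ?_ hg.2
    refine lintegral_congr fun p => ?_
    rw [← ofReal_norm, ← ofReal_norm, Real.norm_of_nonneg (by positivity)]
    dsimp only
    rw [div_eq_mul_inv,
      ENNReal.ofReal_mul (by positivity), ENNReal.ofReal_pow (norm_nonneg _)]
  have hmE : Measurable fun p : Bdy n × Bdy n =>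
      ‖((Real.fourierChar (inner ℝ p.1 p.2) : Circle) : ℂ) - 1‖ₑ ^ 2 *
      ENNReal.ofReal ((‖p.2‖ ^ ((n : ℝ) + 1))⁻¹) := by
    have : Continuous fun p : Bdy n × Bdy n =>
      ((Real.fourierChar (inner ℝ p.1 p.2) : Circle) : ℂ) := by
      exact continuous_subtype_val.comp (Real.continuous_fourierChar.comp continuous_inner)
    have h2 := this.measurable
    fun_prop
  have h2 : ∫⁻ h : Bdy n, ∫⁻ x, ‖g (x + h) - g x‖ₑ ^ 2 *
      ENNReal.ofReal ((‖h‖ ^ ((n : ℝ) + 1))⁻¹) < ⊤ := by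
    refine lt_of_le_of_lt (le_of_eq ?_) h1
    have hmp : MeasurePreserving (fun p : Bdy n × Bdy n => (p.1 + p.2, p.2))
        (volume.prod volume) (volume.prod volume) := measurePreserving_add_prod volume volume
    have hF : AEMeasurable (fun p : Bdy n × Bdy n => ‖g p.1 - g p.2‖ₑ ^ 2 *
        ENNReal.ofReal ((‖p.1 - p.2‖ ^ ((n : ℝ) + 1))⁻¹)) (volume.prod volume) := by
      have m1 : Measurable fun p : Bdy n × Bdy n =>
        ENNReal.ofReal ((‖p.1 - p.2‖ ^ ((n : ℝ) + 1))⁻¹) := by fun_prop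
      exact ((hgm.comp_fst.sub hgm.comp_snd).enorm.pow_const 2).mul m1.aemeasurable
    have hF2 := hF
    rw [← hmp.map_eq] at hF2
    conv_rhs => rw [← hmp.map_eq]
    rw [lintegral_map' hF2 hmp.measurable.aemeasurable]
    refine Eq.trans ?_ (lintegral_prod _ (hF2.comp_measurable hmp.measurable)).symm
    simp [add_comm]
  have h3 : ∫⁻ h : Bdy n, ∫⁻ ξ, (‖((Real.fourierChar (inner ℝ ξ h) : Circle) : ℂ) - 1‖ₑ ^ 2 *
      ENNReal.ofReal ((‖h‖ ^ ((n : ℝ) + 1))⁻¹)) * ‖(𝓕 g : Hbd n) ξ‖ₑ ^ 2 < ⊤ := by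
    refine lt_of_eq_of_lt ?_ h2
    refine lintegral_congr fun h => ?_
    rw [lintegral_mul_const' _ _ ENNReal.ofReal_ne_top, fourier_translate,
      ← lintegral_mul_const' _ _ ENNReal.ofReal_ne_top]
    refine lintegral_congr fun ξ => ?_
    ring
  have hFm : AEMeasurable (fun ξ => ‖(𝓕 g : Hbd n) ξ‖ₑ ^ 2) volume :=
    (Lp.aestronglyMeasurable _).enorm.pow_const 2
  rw [lintegral_lintegral_swap] at h3
  · have h4 : c * ∫⁻ ξ, ‖ξ‖ₑ * ‖(𝓕 g : Hbd n) ξ‖ₑ ^ 2 < ⊤ := by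
      refine lt_of_le_of_lt ?_ h3
      rw [← lintegral_const_mul' _ _ hct]
      refine lintegral_mono fun ξ => ?_
      dsimp only
      rw [lintegral_mul_const' _ _ (by finiteness), ← mul_assoc]
      gcongr
      exact hc ξ
    by_contra hcon
    rw [not_lt, top_le_iff] at hcon
    rw [hcon, ENNReal.mul_top hc0] at h4
    exact lt_irrefl _ h4
  · exact ((hmE.comp measurable_swap).aemeasurable).mul hFm.comp_snd

end Translation
section WeightOp

open scoped FourierTransform SchwartzMap ContDiff ENNReal

variable {n : ℕ}

lemma gag_congr {g g' : Bdy n → ℂ} (h : g =ᵐ[volume] g') (hg : GagB n g) : GagB n g' := by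
  have h1 : ∀ᵐ p : Bdy n × Bdy n ∂((volume : Measure (Bdy n)).prod volume), g p.1 = g' p.1 :=
    Measure.quasiMeasurePreserving_fst.ae h
  have h2 : ∀ᵐ p : Bdy n × Bdy n ∂((volume : Measure (Bdy n)).prod volume), g p.2 = g' p.2 :=
    Measure.quasiMeasurePreserving_snd.ae h
  refine Integrable.congr hg ?_
  filter_upwards [h1, h2] with p a b
  rw [a, b]

lemma weak_congr {v : Bdy n} {f g f' g' : Bdy n → ℂ} (hf : f =ᵐ[volume] f')
    (hg : g =ᵐ[volume] g') (h : IsWeakDerivB n v f g) : IsWeakDerivB n v f' g' := by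
  intro φ hφ
  have e1 : ∫ y, f' y * ((fderiv ℝ φ y) v : ℂ) = ∫ y, f y * ((fderiv ℝ φ y) v : ℂ) := by
    refine integral_congr_ae ?_
    filter_upwards [hf] with y hy
    rw [hy]
  have e2 : ∫ y, g' y * (φ y : ℂ) = ∫ y, g y * (φ y : ℂ) := by
    refine integral_congr_ae ?_
    filter_upwards [hg] with y hy
    rw [hy]
  rw [e1, e2, h φ hφ]

lemma weight_int (f : Hbd n) {f' : Bdy n → ℂ} (hf : ⇑f =ᵐ[volume] f') (h : MemH32B n f') :
    ∫⁻ ξ, ENNReal.ofReal ((1 + ‖ξ‖) ^ 3) * ‖(𝓕 f : Hbd n) ξ‖ₑ ^ 2 < ⊤ := by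
  choose g hw hgL hgG using h.2
  let G : Fin n → Hbd n := fun i => (hgL i).toLp _
  have hG : ∀ i, ⇑(G i) =ᵐ[volume] g i := fun i => (hgL i).coeFn_toLp
  have hF : ∀ i, _ := fun i => fourier_weakDeriv (weak_congr hf.symm (hG i).symm (hw i))
  have hW : ∀ i, _ := fun i => gag_weight (G i) (gag_congr (hG i).symm (hgG i))
  have hfin : ∫⁻ ξ, 4 * ‖(𝓕 f : Hbd n) ξ‖ₑ ^ 2 + 4 * ∑ i, ‖ξ‖ₑ * ‖(𝓕 (G i) : Hbd n) ξ‖ₑ ^ 2 < ⊤ := by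
    have hm : ∀ i, AEMeasurable (fun ξ : Bdy n => ‖ξ‖ₑ * ‖(𝓕 (G i) : Hbd n) ξ‖ₑ ^ 2) volume := fun i =>
      measurable_enorm.aemeasurable.mul ((Lp.aestronglyMeasurable _).enorm.pow_const 2)
    have hm0 : AEMeasurable (fun ξ : Bdy n => 4 * ‖(𝓕 f : Hbd n) ξ‖ₑ ^ 2) volume :=
      ((Lp.aestronglyMeasurable _).enorm.pow_const 2).const_mul 4
    rw [lintegral_add_left' hm0, lintegral_const_mul' _ _ (by norm_num),
      lintegral_const_mul' _ _ (by norm_num), lintegral_finsetSum' _ fun i _ => hm i, lint_sq_Lp]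
    refine ENNReal.add_lt_top.2 ⟨by finiteness, ENNReal.mul_lt_top (by norm_num) ?_⟩
    exact ENNReal.sum_lt_top.2 fun i _ => hW i
  refine lt_of_le_of_lt (lintegral_mono_ae ?_) hfin
  filter_upwards [ae_all_iff.2 hF] with ξ hξ
  have hs : ∑ i, (inner ℝ ξ (bdirs n i)) ^ 2 = ‖ξ‖ ^ 2 := by
    rw [EuclideanSpace.norm_sq_eq]
    refine Finset.sum_congr rfl fun i _ => ?_
    simp [bdirs, EuclideanSpace.inner_single_right]
  set F := ‖(𝓕 f : Hbd n) ξ‖ with hFd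
  set t := ‖ξ‖ with htd
  have hi : ∀ i, ‖(𝓕 (G i) : Hbd n) ξ‖ ^ 2 = 4 * Real.pi ^ 2 * (inner ℝ ξ (bdirs n i)) ^ 2 * F ^ 2 := by
    intro i
    rw [hξ i, norm_mul, norm_mul, norm_mul, norm_mul, ← hFd, Complex.norm_I, Complex.norm_real,
      Complex.norm_real, Real.norm_of_nonneg Real.pi_pos.le, mul_pow, mul_pow, Real.norm_eq_abs, sq_abs]
    rw [Complex.norm_ofNat]
    ring
  have hreal : (1 + t) ^ 3 * F ^ 2 ≤ 4 * F ^ 2 + 4 * ∑ i, t * ‖(𝓕 (G i) : Hbd n) ξ‖ ^ 2 := by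
    have : ∑ i, t * ‖(𝓕 (G i) : Hbd n) ξ‖ ^ 2 = 4 * Real.pi ^ 2 * t ^ 3 * F ^ 2 := by
      rw [← Finset.mul_sum, Finset.sum_congr rfl fun i _ => hi i, ← Finset.sum_mul,
        ← Finset.mul_sum, hs]; ring
    rw [this]
    have ht : 0 ≤ t := norm_nonneg _
    have hpi : 1 ≤ 4 * Real.pi ^ 2 := by nlinarith [Real.pi_gt_three]
    have h1 : t ^ 3 ≤ 4 * Real.pi ^ 2 * t ^ 3 := le_mul_of_one_le_left (by positivity) hpi
    have h2 : (1 + t) ^ 3 ≤ 4 + 4 * t ^ 3 := by nlinarith [mul_nonneg (add_nonneg ht one_pos.le) (sq_nonneg (t - 1))]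
    have h3 : (1 + t) ^ 3 ≤ 4 + 4 * (4 * Real.pi ^ 2 * t ^ 3) := by linarith
    calc _ ≤ (4 + 4 * (4 * Real.pi ^ 2 * t ^ 3)) * F ^ 2 := by gcongr
      _ = _ := by ring
  have hconv := ENNReal.ofReal_le_ofReal hreal
  rw [ENNReal.ofReal_mul (by positivity), ENNReal.ofReal_add (by positivity) (by positivity),
    ENNReal.ofReal_mul (by norm_num), ENNReal.ofReal_mul (by norm_num),
    ENNReal.ofReal_sum_of_nonneg (fun i _ => by positivity)] at hconv
  simp only [ENNReal.ofReal_mul (norm_nonneg ξ), ENNReal.ofReal_pow (norm_nonneg _), ofReal_norm,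
    hFd, htd, ENNReal.ofReal_ofNat] at hconv
  exact hconv

lemma exists_mulOp (m : Bdy n → ℂ) (hm : AEStronglyMeasurable m volume) (C : ℝ) (hC0 : 0 ≤ C)
    (hC : ∀ᵐ x, ‖m x‖ ≤ C) : ∃ M : Hbd n →L[ℂ] Hbd n,
      (∀ f : Hbd n, ⇑(M f) =ᵐ[volume] fun x => m x * f x) ∧ ‖M‖ ≤ C := by
  have hmem : ∀ f : Hbd n, MemLp (fun x => m x * f x) 2 volume := fun f => by
    refine MemLp.of_le_mul (c := C) (Lp.memLp f) (hm.mul (Lp.aestronglyMeasurable f)) ?_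
    filter_upwards [hC] with x hx
    rw [norm_mul]; gcongr
  let L : Hbd n →ₗ[ℂ] Hbd n :=
    { toFun := fun f => (hmem f).toLp _
      map_add' := fun f g => by
        refine Lp.ext ?_
        filter_upwards [(hmem (f + g)).coeFn_toLp, (hmem f).coeFn_toLp, (hmem g).coeFn_toLp,
          Lp.coeFn_add f g, Lp.coeFn_add ((hmem f).toLp _) ((hmem g).toLp _)] with x h1 h2 h3 h4 h5
        rw [h1, h5, Pi.add_apply, h2, h3, h4, Pi.add_apply, mul_add]
      map_smul' := fun c f => by
        refine Lp.ext ?_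
        filter_upwards [(hmem (c • f)).coeFn_toLp, (hmem f).coeFn_toLp,
          Lp.coeFn_smul c f, Lp.coeFn_smul c ((hmem f).toLp _)] with x h1 h2 h4 h5
        simp only [RingHom.id_apply]
        rw [h1, h5, Pi.smul_apply, h2, h4, Pi.smul_apply, smul_eq_mul, smul_eq_mul]; ring }
  have hb : ∀ f, ‖L f‖ ≤ C * ‖f‖ := fun f => by
    refine Lp.norm_le_mul_norm_of_ae_le_mul ?_
    filter_upwards [hC, (hmem f).coeFn_toLp] with x hx h1
    have : (L f) x = m x * f x := h1
    rw [this, norm_mul]; gcongr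
  exact ⟨L.mkContinuous C hb, fun f => (hmem f).coeFn_toLp, L.mkContinuous_norm_le hC0 hb⟩

lemma exists_weightOp {K : Type} [NormedAddCommGroup K] [InnerProductSpace ℂ K] [CompleteSpace K]
    (K₀ : K →L[ℂ] Hbd n)
    (hran : ∀ u : K, ∃ f : Bdy n → ℂ, ⇑(K₀ u) =ᵐ[(volume : Measure (Bdy n))] f ∧ MemH32B n f) :
    ∃ B : K →L[ℂ] Hbd n, ∀ u, ⇑(𝓕 (K₀ u) : Hbd n) =ᵐ[volume]
      fun ξ => (((1 + ‖ξ‖) ^ (-(3 / 2) : ℝ) : ℝ) : ℂ) * B u ξ := by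
  have hmem : ∀ u, MemLp (fun ξ => (((1 + ‖ξ‖) ^ (3 / 2 : ℝ) : ℝ) : ℂ) * (𝓕 (K₀ u) : Hbd n) ξ) 2
      volume := by
    intro u
    obtain ⟨f, hf, hf2⟩ := hran u
    have hmeas : AEStronglyMeasurable
        (fun ξ => (((1 + ‖ξ‖) ^ (3 / 2 : ℝ) : ℝ) : ℂ) * (𝓕 (K₀ u) : Hbd n) ξ) volume := by
      have : Measurable fun ξ : Bdy n => (((1 + ‖ξ‖) ^ (3 / 2 : ℝ) : ℝ) : ℂ) := by fun_prop
      exact this.aestronglyMeasurable.mul (Lp.aestronglyMeasurable _)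
    refine ⟨hmeas, ?_⟩
    have h1 := weight_int (K₀ u) hf hf2
    have h2 : eLpNorm (fun ξ => (((1 + ‖ξ‖) ^ (3 / 2 : ℝ) : ℝ) : ℂ) * (𝓕 (K₀ u) : Hbd n) ξ) 2
      volume ^ 2 < ⊤ := by
      rw [← lint_sq]
      refine lt_of_eq_of_lt (lintegral_congr fun ξ => ?_) h1
      rw [enorm_mul, mul_pow, ← ofReal_norm, Complex.norm_real,
        Real.norm_of_nonneg (by positivity), ← ENNReal.ofReal_pow (by positivity),
        ← Real.rpow_natCast, ← Real.rpow_mul (by positivity)]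
      congr 2
      norm_num
    exact (ENNReal.pow_lt_top_iff.1 h2).resolve_right (by norm_num)
  let L : K →ₗ[ℂ] Hbd n :=
    { toFun := fun u => (hmem u).toLp _
      map_add' := fun f g => by
        refine Lp.ext ?_
        have hadd : (𝓕 (K₀ (f + g)) : Hbd n) = 𝓕 (K₀ f) + 𝓕 (K₀ g) := by
          rw [map_add, FourierTransform.fourier_add]
        filter_upwards [(hmem (f + g)).coeFn_toLp, (hmem f).coeFn_toLp, (hmem g).coeFn_toLp,
          Lp.coeFn_add (𝓕 (K₀ f) : Hbd n) (𝓕 (K₀ g)),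
          Lp.coeFn_add ((hmem f).toLp _) ((hmem g).toLp _)] with x h1 h2 h3 h4 h5
        rw [h1, h5, Pi.add_apply, h2, h3, hadd, h4, Pi.add_apply, mul_add]
      map_smul' := fun c f => by
        refine Lp.ext ?_
        have hsm : (𝓕 (K₀ (c • f)) : Hbd n) = c • 𝓕 (K₀ f) := by
          rw [map_smul, FourierTransform.fourier_smul]
        filter_upwards [(hmem (c • f)).coeFn_toLp, (hmem f).coeFn_toLp,
          Lp.coeFn_smul c (𝓕 (K₀ f) : Hbd n), Lp.coeFn_smul c ((hmem f).toLp _)] with x h1 h2 h4 h5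
        simp only [RingHom.id_apply]
        rw [h1, h5, Pi.smul_apply, h2, hsm, h4, Pi.smul_apply, smul_eq_mul, smul_eq_mul]; ring }
  have hwm : Measurable fun ξ : Bdy n => (((1 + ‖ξ‖) ^ (-(3 / 2) : ℝ) : ℝ) : ℂ) := by fun_prop
  obtain ⟨M, hM, -⟩ := exists_mulOp (fun ξ : Bdy n => (((1 + ‖ξ‖) ^ (-(3 / 2) : ℝ) : ℝ) : ℂ))
    hwm.aestronglyMeasurable 1 zero_le_one (Eventually.of_forall fun ξ => by
      rw [Complex.norm_real, Real.norm_of_nonneg (by positivity)]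
      exact Real.rpow_le_one_of_one_le_of_nonpos (by linarith [norm_nonneg ξ]) (by norm_num))
  have hML : ∀ u, M (L u) = 𝓕 (K₀ u) := fun u => by
    refine Lp.ext ?_
    have h2 : ⇑(L u) =ᵐ[volume] _ := (hmem u).coeFn_toLp
    filter_upwards [hM (L u), h2] with ξ h1 h2
    rw [h1, h2, ← mul_assoc, ← Complex.ofReal_mul, ← Real.rpow_add (by positivity)]
    norm_num
  have hinj : ∀ f g, M f = M g → f = g := fun f g hfg => by
    refine Lp.ext ?_
    filter_upwards [hM f, hM g] with ξ h1 h2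
    rw [hfg, h2] at h1
    have : (((1 + ‖ξ‖) ^ (-(3 / 2) : ℝ) : ℝ) : ℂ) ≠ 0 := by
      rw [Complex.ofReal_ne_zero]; positivity
    exact (mul_left_cancel₀ this h1).symm
  have hclosed : ∀ (u : ℕ → K) (x : K) (y : Hbd n), Tendsto u atTop (𝓝 x) →
      Tendsto (L ∘ u) atTop (𝓝 y) → y = L x := by
    intro u x y hu hy
    refine hinj _ _ ?_
    have h1 : Tendsto (fun k => M (L (u k))) atTop (𝓝 (M y)) := (M.continuous.tendsto y).comp hy
    have h2 : Tendsto (fun k => M (L (u k))) atTop (𝓝 (M (L x))) := by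
      simp only [hML]
      have hc : Continuous fun u => (𝓕 (K₀ u) : Hbd n) :=
        (Lp.fourierTransformₗᵢ (Bdy n) ℂ).continuous.comp K₀.continuous
      exact (hc.tendsto x).comp hu
    exact tendsto_nhds_unique h1 h2
  refine ⟨ContinuousLinearMap.ofSeqClosedGraph hclosed, fun u => ?_⟩
  have := hM (L u)
  rw [hML] at this
  exact this

end WeightOp
section MainPart

open scoped FourierTransform SchwartzMap ContDiff ENNReal

variable {n : ℕ}

lemma bessel_low {K : Type} [NormedAddCommGroup K] [InnerProductSpace ℂ K] [CompleteSpace K]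
    (B : K →L[ℂ] Hbd n) (κ : Bdy n → ℂ) (hκ : MemLp κ 2 volume) (M : Hbd n →L[ℂ] Hbd n)
    (hM : ∀ f : Hbd n, ⇑(M f) =ᵐ[volume] fun x => κ x * f x)
    (A : ℝ) (hA0 : 0 ≤ A) (hA : ∫⁻ x, ‖κ x‖ₑ ^ 2 ≤ ENNReal.ofReal A)
    {N : ℕ} (e : Fin N → K) (he : Orthonormal ℂ e) :
    ∀ᵐ x : Bdy n, ∑ j, ‖(𝓕⁻ (M (B (e j))) : Hbd n) x‖ ^ 2 ≤ ‖B‖ ^ 2 * A := by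
  have hint : ∀ j, Integrable (⇑(M (B (e j)))) volume := fun j =>
    (int_mul hκ (Lp.memLp (B (e j)))).congr (hM _).symm
  filter_upwards [ae_all_iff.2 fun j => fourierInv_ae (M (B (e j))) (hint j)] with x hx
  have hEm : Continuous fun ξ : Bdy n => ((Real.fourierChar (inner ℝ ξ x) : Circle) : ℂ) :=
    continuous_subtype_val.comp (Real.continuous_fourierChar.comp
      (continuous_id.inner continuous_const))
  have hkm : MemLp (fun ξ => (starRingEnd ℂ)
      (((Real.fourierChar (inner ℝ ξ x) : Circle) : ℂ) * κ ξ)) 2 volume := by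
    refine MemLp.of_le hκ (Complex.continuous_conj.comp_aestronglyMeasurable
      (hEm.aestronglyMeasurable.mul hκ.1)) (Eventually.of_forall fun ξ => ?_)
    rw [RCLike.norm_conj, norm_mul, Circle.norm_coe, one_mul]
  set k : Hbd n := hkm.toLp _ with hk
  have hkn : ‖k‖ ^ 2 ≤ A := by
    have h1 : ‖k‖ₑ ^ 2 ≤ ENNReal.ofReal A := by
      rw [← lint_sq_Lp]
      refine le_trans (le_of_eq (lintegral_congr_ae ?_)) hA
      filter_upwards [hkm.coeFn_toLp] with ξ hξ
      rw [hk, hξ, ← ofReal_norm, ← ofReal_norm, RCLike.norm_conj, norm_mul, Circle.norm_coe, one_mul]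
    rw [← ofReal_norm, ← ENNReal.ofReal_pow (norm_nonneg _)] at h1
    exact (ENNReal.ofReal_le_ofReal_iff hA0).1 h1
  have hval : ∀ j, (𝓕⁻ (M (B (e j))) : Hbd n) x = inner ℂ (ContinuousLinearMap.adjoint B k) (e j) := by
    intro j
    rw [hx j, ContinuousLinearMap.adjoint_inner_left, L2.inner_def, Real.fourierInv_eq]
    refine integral_congr_ae ?_
    filter_upwards [hM (B (e j)), hkm.coeFn_toLp] with ξ h1 h2
    rw [hk, h1, h2, Circle.smul_def, RCLike.inner_apply]
    simp only [smul_eq_mul, Complex.conj_conj]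
    ring
  calc ∑ j, ‖(𝓕⁻ (M (B (e j))) : Hbd n) x‖ ^ 2
      = ∑ j, ‖inner ℂ (e j) (ContinuousLinearMap.adjoint B k)‖ ^ 2 := by
        refine Finset.sum_congr rfl fun j _ => ?_
        rw [hval, norm_inner_symm]
    _ ≤ ‖ContinuousLinearMap.adjoint B k‖ ^ 2 := he.sum_inner_products_le _
    _ ≤ (‖B‖ * ‖k‖) ^ 2 := by
        gcongr
        refine ((ContinuousLinearMap.adjoint B).le_opNorm k).trans ?_
        rw [LinearIsometryEquiv.norm_map]
    _ = ‖B‖ ^ 2 * ‖k‖ ^ 2 := by ring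
    _ ≤ _ := by gcongr

lemma sum_mul_le (α : Bdy n → ℂ) (hα2 : MemLp α 2 volume) (M : Hbd n →L[ℂ] Hbd n)
    (hM : ∀ f : Hbd n, ⇑(M f) =ᵐ[volume] fun x => α x * f x) {N : ℕ} (g : Fin N → Hbd n)
    (Q : ℝ) (hQ0 : 0 ≤ Q) (hQ : ∀ᵐ x : Bdy n, ∑ j, ‖g j x‖ ^ 2 ≤ Q) :
    ∑ j, ‖M (g j)‖ ^ 2 ≤ Q * (eLpNorm α 2 volume).toReal ^ 2 := by
  have h1 : ∑ j, ‖M (g j)‖ₑ ^ 2 ≤ ENNReal.ofReal Q * eLpNorm α 2 volume ^ 2 := by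
    calc ∑ j, ‖M (g j)‖ₑ ^ 2 = ∑ j, ∫⁻ x, ‖α x‖ₑ ^ 2 * ‖g j x‖ₑ ^ 2 := by
          refine Finset.sum_congr rfl fun j _ => ?_
          rw [← lint_sq_Lp]
          refine lintegral_congr_ae ?_
          filter_upwards [hM (g j)] with x hx
          rw [hx, enorm_mul, mul_pow]
      _ = ∫⁻ x, ∑ j, ‖α x‖ₑ ^ 2 * ‖g j x‖ₑ ^ 2 :=
          (lintegral_finsetSum' _ fun j _ => (hα2.1.enorm.pow_const 2).mul
            ((Lp.aestronglyMeasurable _).enorm.pow_const 2)).symm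
      _ ≤ ∫⁻ x, ENNReal.ofReal Q * ‖α x‖ₑ ^ 2 := by
          refine lintegral_mono_ae ?_
          filter_upwards [hQ] with x hx
          rw [← Finset.mul_sum, mul_comm]
          gcongr
          refine le_trans (le_of_eq ?_) (ENNReal.ofReal_le_ofReal hx)
          rw [ENNReal.ofReal_sum_of_nonneg fun j _ => by positivity]
          refine Finset.sum_congr rfl fun j _ => ?_
          rw [ENNReal.ofReal_pow (norm_nonneg _), ofReal_norm]
      _ = _ := by rw [lintegral_const_mul' _ _ ENNReal.ofReal_ne_top, lint_sq]
  have h2 := ENNReal.toReal_mono (ENNReal.mul_ne_top ENNReal.ofReal_ne_top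
    (ENNReal.pow_ne_top hα2.2.ne)) h1
  rw [ENNReal.toReal_sum (fun j _ => by finiteness), ENNReal.toReal_mul,
    ENNReal.toReal_ofReal hQ0, ENNReal.toReal_pow] at h2
  refine le_trans (le_of_eq ?_) h2
  refine Finset.sum_congr rfl fun j _ => ?_
  rw [ENNReal.toReal_pow, toReal_enorm]

end MainPart
section Final

open scoped FourierTransform SchwartzMap ContDiff ENNReal

lemma main_bound (n : ℕ) (K : Type) [NormedAddCommGroup K]
    [InnerProductSpace ℂ K] [CompleteSpace K] (K₀ : K →L[ℂ] Hbd n)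
    (B : K →L[ℂ] Hbd n) (hB : ∀ u, ⇑(𝓕 (K₀ u) : Hbd n) =ᵐ[volume]
      fun ξ => (((1 + ‖ξ‖) ^ (-(3 / 2) : ℝ) : ℝ) : ℂ) * B u ξ)
    (α : Bdy n → ℂ) (hα2 : MemLp α 2 volume) (Mα : Hbd n →L[ℂ] Hbd n)
    (hMα : ∀ f : Hbd n, ⇑(Mα f) =ᵐ[volume] fun x => α x * f x)
    (m : ℝ) (hm3 : 3 < m) (hmn : (n : ℝ) < m) (k : ℕ) (e : Fin (k + 1) → K)
    (he : Orthonormal ℂ e) :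
    ∑ j, ‖Mα (K₀ (e j))‖ ^ 2 ≤ ((k : ℝ) + 1) * ((2 * (‖B‖ ^ 2 * (∫ ξ : Bdy n, (1 + ‖ξ‖) ^ (-m))
      * (eLpNorm α 2 volume).toReal ^ 2) + 2 * (‖Mα‖ * ‖B‖) ^ 2) *
      ((k : ℝ) + 1) ^ (-(3 / m))) := by
  have hk1 : (1 : ℝ) ≤ (k : ℝ) + 1 := by linarith [Nat.cast_nonneg (α := ℝ) k]
  have hm0 : 0 < m := by linarith
  set ρ : ℝ := ((k : ℝ) + 1) ^ (1 / m) with hρ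
  have hρ1 : 1 ≤ ρ := Real.one_le_rpow hk1 (by positivity)
  have hρ0 : 0 < ρ := by linarith
  have hρm : ρ ^ m = (k : ℝ) + 1 := by
    rw [hρ, ← Real.rpow_mul (by linarith), one_div_mul_cancel hm0.ne', Real.rpow_one]
  have hρ3 : ((k : ℝ) + 1) ^ (-(3 / m)) = ρ ^ (-3 : ℝ) := by
    rw [hρ, ← Real.rpow_mul (by linarith)]; congr 1; ring
  set J : ℝ := ∫ ξ : Bdy n, (1 + ‖ξ‖) ^ (-m) with hJ
  have hJi : Integrable (fun ξ : Bdy n => (1 + ‖ξ‖) ^ (-m)) volume :=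
    integrable_one_add_norm (by simpa using hmn)
  have hJ0 : 0 ≤ J := integral_nonneg fun ξ => by positivity
  let W : Bdy n → ℂ := fun ξ => (((1 + ‖ξ‖) ^ (-(3 / 2) : ℝ) : ℝ) : ℂ)
  have hWm : Measurable W := by
    have : Measurable fun ξ : Bdy n => (((1 + ‖ξ‖) ^ (-(3 / 2) : ℝ) : ℝ) : ℂ) := by fun_prop
    exact this
  have hWn : ∀ ξ, ‖W ξ‖ = (1 + ‖ξ‖) ^ (-(3 / 2) : ℝ) := fun ξ => by
    simp only [W]
    rw [Complex.norm_real, Real.norm_of_nonneg (by positivity)]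
  have hW1 : ∀ ξ, ‖W ξ‖ ≤ 1 := fun ξ => by
    rw [hWn]
    exact Real.rpow_le_one_of_one_le_of_nonpos (by linarith [norm_nonneg ξ]) (by norm_num)
  let S : Set (Bdy n) := {ξ | 1 + ‖ξ‖ ≤ ρ}
  have hS : MeasurableSet S := measurableSet_le (by fun_prop) measurable_const
  have hlm : AEStronglyMeasurable (S.indicator W) volume :=
    (hWm.indicator hS).aestronglyMeasurable
  have hhm : AEStronglyMeasurable (Sᶜ.indicator W) volume :=
    (hWm.indicator hS.compl).aestronglyMeasurable
  obtain ⟨Ml, hMl, -⟩ := exists_mulOp (S.indicator W) hlm 1 zero_le_one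
    (Eventually.of_forall fun ξ => (norm_indicator_le_norm_self _ _).trans (hW1 ξ))
  obtain ⟨Mh, hMh, hMhn⟩ := exists_mulOp (Sᶜ.indicator W) hhm (ρ ^ (-(3 / 2) : ℝ)) (by positivity)
    (Eventually.of_forall fun ξ => by
      by_cases h : ξ ∈ S
      · rw [Set.indicator_of_notMem (by simpa using h), norm_zero]; positivity
      · rw [Set.indicator_of_mem (by simpa using h), hWn]
        have h' : ρ < 1 + ‖ξ‖ := not_le.1 h
        exact Real.rpow_le_rpow_of_nonpos hρ0 h'.le (by norm_num))
  have hdec : ∀ u, K₀ u = 𝓕⁻ (Ml (B u)) + 𝓕⁻ (Mh (B u)) := by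
    intro u
    have h1 : (𝓕 (K₀ u) : Hbd n) = Ml (B u) + Mh (B u) := by
      refine Lp.ext ?_
      filter_upwards [hB u, hMl (B u), hMh (B u), Lp.coeFn_add (Ml (B u)) (Mh (B u))] with ξ a b c d
      rw [a, d, Pi.add_apply, b, c, ← add_mul]
      congr 1
      exact (congrFun (Set.indicator_self_add_compl S W) ξ).symm
    rw [← FourierTransform.fourierInv_add, ← h1, FourierTransform.fourierInv_fourier_eq]
  have hpt : ∀ ξ, ‖S.indicator W ξ‖ ^ 2 ≤ ρ ^ (m - 3) * (1 + ‖ξ‖) ^ (-m) := by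
    intro ξ
    have h1 : 0 < 1 + ‖ξ‖ := by positivity
    by_cases h : ξ ∈ S
    · have h' : 1 + ‖ξ‖ ≤ ρ := h
      rw [Set.indicator_of_mem h, hWn, ← Real.rpow_natCast, ← Real.rpow_mul h1.le]
      calc (1 + ‖ξ‖) ^ (-(3 / 2) * ((2 : ℕ) : ℝ)) = (1 + ‖ξ‖) ^ (m - 3) * (1 + ‖ξ‖) ^ (-m) := by
            rw [← Real.rpow_add h1]; congr 1; push_cast; ring
        _ ≤ _ := by
            gcongr
    · rw [Set.indicator_of_notMem h, norm_zero, zero_pow two_ne_zero]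
      positivity
  have hA : ∫⁻ ξ, ‖S.indicator W ξ‖ₑ ^ 2 ≤ ENNReal.ofReal (ρ ^ (m - 3) * J) := by
    rw [hJ, ← integral_const_mul, ofReal_integral_eq_lintegral_ofReal (hJi.const_mul _)
      (Eventually.of_forall fun ξ => by positivity)]
    refine lintegral_mono fun ξ => ?_
    rw [← ofReal_norm, ← ENNReal.ofReal_pow (norm_nonneg _)]
    exact ENNReal.ofReal_le_ofReal (hpt ξ)
  have hlL : MemLp (S.indicator W) 2 volume := by
    refine ⟨hlm, ?_⟩
    have h2 : eLpNorm (S.indicator W) 2 volume ^ 2 < ⊤ := by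
      rw [← lint_sq]; exact hA.trans_lt ENNReal.ofReal_lt_top
    exact (ENNReal.pow_lt_top_iff.1 h2).resolve_right (by norm_num)
  have hbes := bessel_low B (S.indicator W) hlL Ml hMl (ρ ^ (m - 3) * J) (by positivity) hA e he
  have hlow := sum_mul_le α hα2 Mα hMα (fun j => (𝓕⁻ (Ml (B (e j))) : Hbd n)) _ (by positivity) hbes
  have hhigh : ∀ j, ‖Mα (𝓕⁻ (Mh (B (e j))) : Hbd n)‖ ^ 2 ≤ (‖Mα‖ * ‖B‖) ^ 2 * ρ ^ (-3 : ℝ) := by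
    intro j
    have h1 : ‖(𝓕⁻ (Mh (B (e j))) : Hbd n)‖ = ‖Mh (B (e j))‖ :=
      (Lp.fourierTransformₗᵢ (Bdy n) ℂ).symm.norm_map _
    have h2 : ‖Mα (𝓕⁻ (Mh (B (e j))) : Hbd n)‖ ≤ ‖Mα‖ * (ρ ^ (-(3 / 2) : ℝ) * (‖B‖ * 1)) := by
      refine (Mα.le_opNorm _).trans ?_
      rw [h1]
      gcongr
      refine (Mh.le_opNorm _).trans ?_
      gcongr
      refine (B.le_opNorm _).trans ?_
      rw [he.1 j]
    calc _ ≤ (‖Mα‖ * (ρ ^ (-(3 / 2) : ℝ) * (‖B‖ * 1))) ^ 2 := by gcongr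
      _ = (‖Mα‖ * ‖B‖) ^ 2 * (ρ ^ (-(3 / 2) : ℝ)) ^ 2 := by ring
      _ = _ := by
        rw [← Real.rpow_natCast (ρ ^ (-(3 / 2) : ℝ)), ← Real.rpow_mul hρ0.le]
        norm_num
  have hsplit : ρ ^ (m - 3) = ((k : ℝ) + 1) * ρ ^ (-3 : ℝ) := by
    rw [sub_eq_add_neg, Real.rpow_add hρ0, hρm]
  calc ∑ j, ‖Mα (K₀ (e j))‖ ^ 2
      ≤ ∑ j, (2 * ‖Mα (𝓕⁻ (Ml (B (e j))) : Hbd n)‖ ^ 2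
          + 2 * ((‖Mα‖ * ‖B‖) ^ 2 * ρ ^ (-3 : ℝ))) := by
        refine Finset.sum_le_sum fun j _ => ?_
        rw [hdec, map_add]
        have h1 := norm_add_le (Mα (𝓕⁻ (Ml (B (e j))) : Hbd n)) (Mα (𝓕⁻ (Mh (B (e j))) : Hbd n))
        have h2 := hhigh j
        have h3 := pow_le_pow_left₀ (norm_nonneg _) h1 2
        nlinarith [sq_nonneg (‖Mα (𝓕⁻ (Ml (B (e j))) : Hbd n)‖ - ‖Mα (𝓕⁻ (Mh (B (e j))) : Hbd n)‖)]
    _ = 2 * ∑ j, ‖Mα (𝓕⁻ (Ml (B (e j))) : Hbd n)‖ ^ 2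
          + ((k : ℝ) + 1) * (2 * ((‖Mα‖ * ‖B‖) ^ 2 * ρ ^ (-3 : ℝ))) := by
        rw [Finset.sum_add_distrib, ← Finset.mul_sum]
        simp
    _ ≤ 2 * (‖B‖ ^ 2 * (ρ ^ (m - 3) * J) * (eLpNorm α 2 volume).toReal ^ 2)
          + ((k : ℝ) + 1) * (2 * ((‖Mα‖ * ‖B‖) ^ 2 * ρ ^ (-3 : ℝ))) := by
        gcongr
    _ = _ := by
        rw [hsplit, hρ3]; ring

end Final
theorem statement6 (n : ℕ) (hn : 3 ≤ n) (K : Type) [NormedAddCommGroup K]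
    [InnerProductSpace ℂ K] [CompleteSpace K] (K₀ : K →L[ℂ] Hbd n)
    (hran : ∀ u : K, ∃ f : Bdy n → ℂ, ⇑(K₀ u) =ᵐ[(volume : Measure (Bdy n))] f ∧ MemH32B n f)
    (α : Bdy n → ℂ) (hα : MemLp α ⊤ (volume : Measure (Bdy n)))
    (hα2 : MemLp α 2 (volume : Measure (Bdy n)))
    (T : K →L[ℂ] Hbd n)
    (hT : ∀ u : K, ⇑(T u) =ᵐ[(volume : Measure (Bdy n))] fun y => α y * (K₀ u) y) :
    ∀ r : ℝ, 2 * (n : ℝ) / 3 < r → MemSchatten r T := by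
  intro r hr
  have hn3 : (3 : ℝ) ≤ (n : ℝ) := by exact_mod_cast hn
  obtain ⟨B, hB⟩ := exists_weightOp K₀ hran
  obtain ⟨Mα, hMα, -⟩ := exists_mulOp α hα.1 (eLpNorm α ⊤ volume).toReal ENNReal.toReal_nonneg
    (by
      have hb := ae_le_eLpNormEssSup (f := α) (μ := (volume : Measure (Bdy n)))
      filter_upwards [hb] with x hx
      have hfin : eLpNorm α ⊤ volume ≠ ⊤ := hα.2.ne
      rw [eLpNorm_exponent_top] at hfin ⊢
      have := ENNReal.toReal_mono hfin hx
      rwa [toReal_enorm] at this)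
  have hTM : ∀ u, T u = Mα (K₀ u) := fun u => by
    refine Lp.ext ?_
    filter_upwards [hT u, hMα (K₀ u)] with x a b
    rw [a, b]
  have hr2 : (n : ℝ) < 3 * r / 2 := by
    rw [div_lt_iff₀ (by norm_num)] at hr; linarith
  set m : ℝ := ((n : ℝ) + 3 * r / 2) / 2 with hm
  have hmn : (n : ℝ) < m := by linarith
  have hm3 : 3 < m := by linarith
  have hm0 : 0 < m := by linarith
  have hmr : m < 3 * r / 2 := by linarith
  have hr0 : 0 < r := by linarith
  set C₀ : ℝ := 2 * (‖B‖ ^ 2 * (∫ ξ : Bdy n, (1 + ‖ξ‖) ^ (-m))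
      * (eLpNorm α 2 volume).toReal ^ 2) + 2 * (‖Mα‖ * ‖B‖) ^ 2 with hC
  refine memSchatten_of_le T (Real.sqrt C₀) (3 / (2 * m)) r (by positivity) hr0 ?_ fun k => ?_
  · rw [div_mul_eq_mul_div, lt_div_iff₀ (by positivity)]; linarith
  have h1 := sNum_sq_le T k (C₀ * ((k : ℝ) + 1) ^ (-(3 / m))) fun e he => by
    simp only [hTM]
    exact main_bound n K K₀ B hB α hα2 Mα hMα m hm3 hmn k e he
  refine h1.trans (le_of_eq ?_)
  rw [Real.sqrt_mul' _ (by positivity), Real.sqrt_eq_rpow (_ ^ _), ← Real.rpow_mul (by positivity)]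
  congr 2
  field_simp

end RobinHS
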